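/- arXiv:2112.10405 — 2 statements merged into one kernel-verified Lean document; each statement's English description precedes it below -/
import Mathlib

section
/- In the superdiffusive regime 3/4 < p < 1, assume S_n/n^{2p−1} → L almost surely and ℙ(L² > 0) > 0. Then, under the conditional probability measure ℙ(· ∣ {L² > 0}), the law of √(V_n)·(p̂_n − p) converges weakly to the standard Gaussian distribution N(0,1) as n → ∞. -/
open MeasureTheory ProbabilityTheory Filter Finset
open scoped BoundedContinuousFunction ENNReal NNReal Topology

noncomputable section

variable {Ω : Type*}

/-- Position of the elephant random walk: `S n = X 1 + ⋯ + X n`. -/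
def erwS (X : ℕ → Ω → ℝ) (n : ℕ) (ω : Ω) : ℝ :=
  ∑ k ∈ Finset.Icc 1 n, X k ω

/-- `V n = 4 ∑_{k=1}^{n-1} (S k / k)²`, the approximate conditional Fisher information. -/
def erwV (X : ℕ → Ω → ℝ) (n : ℕ) (ω : Ω) : ℝ :=
  4 * ∑ k ∈ Finset.Icc 1 (n - 1), (erwS X k ω / k) ^ 2

/-- The quasi-maximum likelihood estimator `p̂ n` of the memory parameter. -/
def erwPhat (X : ℕ → Ω → ℝ) (n : ℕ) (ω : Ω) : ℝ :=
  (∑ k ∈ Finset.Icc 1 (n - 1), (erwS X k ω / k) * (X (k + 1) ω + erwS X k ω / k)) /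
    (2 * ∑ k ∈ Finset.Icc 1 (n - 1), (erwS X k ω / k) ^ 2)

/-- The elephant random walk hypotheses with memory parameter `p ∈ [0,1]`:
the steps take values in `{-1, 1}`, are adapted to the filtration `ℱ`
(which plays the role of `σ(X_1, …, X_n)`), and
`E[X_{n+1} | ℱ_n] = (2p - 1) · S_n / n` almost surely. -/
def IsERW {m0 : MeasurableSpace Ω} (μ : Measure Ω) (ℱ : Filtration ℕ m0)
    (X : ℕ → Ω → ℝ) (p : ℝ) : Prop :=
  0 ≤ p ∧ p ≤ 1 ∧
  (∀ n, 1 ≤ n → ∀ ω, X n ω = 1 ∨ X n ω = -1) ∧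
  (∀ n, 1 ≤ n → Measurable[ℱ n] (X n)) ∧
  (∀ n, 1 ≤ n → μ[X (n + 1) | ℱ n] =ᵐ[μ] fun ω => (2 * p - 1) * (erwS X n ω / n))


lemma erwAux_key_bound (θ b : ℝ) (hθ : |θ| ≤ 1 / 4) (hb : |b| ≤ 1) :
    ‖Complex.exp (-(Complex.I * θ * b) + θ ^ 2 / 2) *
      (Complex.cos θ + Complex.I * b * Complex.sin θ) - 1‖ ≤ 20 * (|θ| ^ 3 + θ ^ 2 * b ^ 2) := by
  set z1 : ℂ := Complex.I * θ * (1 - b) + θ ^ 2 / 2 with hz1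
  set z2 : ℂ := -(Complex.I * θ * (1 + b)) + θ ^ 2 / 2 with hz2
  have hθ0 := abs_nonneg θ
  have hsq : θ ^ 2 = |θ| ^ 2 := (sq_abs θ).symm
  have hb' := abs_le.mp hb
  have e1 : Complex.exp z1 = Complex.exp (-(Complex.I * θ * b) + θ ^ 2 / 2) *
      (Complex.cos θ + Complex.sin θ * Complex.I) := by
    rw [← Complex.exp_mul_I, ← Complex.exp_add]; congr 1; rw [hz1]; ring
  have e2 : Complex.exp z2 = Complex.exp (-(Complex.I * θ * b) + θ ^ 2 / 2) *
      (Complex.cos θ - Complex.sin θ * Complex.I) := by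
    have : (Complex.cos θ - Complex.sin θ * Complex.I) = Complex.exp (-(θ * Complex.I)) := by
      have := Complex.exp_mul_I (-θ)
      rw [Complex.cos_neg, Complex.sin_neg] at this
      rw [← neg_mul, this]; ring
    rw [this, ← Complex.exp_add]; congr 1; rw [hz2]; ring
  have bd : ∀ z : ℂ, ‖z‖ ≤ 9 / 4 * |θ| → ‖Complex.exp z - (1 + z + z ^ 2 / 2)‖ ≤ 5 * |θ| ^ 3 := by
    intro z hz
    have h1 : ‖z‖ ≤ 1 := by linarith
    have := Complex.exp_bound h1 (n := 3) (by norm_num)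
    have h3 : ‖z‖ ^ 3 ≤ (9 / 4 * |θ|) ^ 3 := by gcongr
    have hs : (∑ m ∈ Finset.range 3, z ^ m / (m.factorial : ℂ)) = 1 + z + z ^ 2 / 2 := by
      simp [Finset.sum_range_succ, Nat.factorial]
    rw [hs] at this
    refine this.trans ?_
    norm_num [Nat.factorial]
    have : 0 ≤ |θ| ^ 3 := by positivity
    nlinarith
  have hn : ∀ z : ℂ, ∀ r : ℝ, |r| ≤ 2 → z = Complex.I * θ * r + θ ^ 2 / 2 →
      ‖z‖ ≤ 9 / 4 * |θ| := by
    intro z r hr hz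
    rw [hz]
    refine (norm_add_le _ _).trans ?_
    simp only [norm_mul, Complex.norm_I, Complex.norm_real, Real.norm_eq_abs, norm_div, norm_pow,
      one_mul, Complex.norm_ofNat]
    nlinarith
  have n1 := bd z1 (hn z1 (1 - b) (by rw [abs_le]; constructor <;> linarith) (by
    rw [hz1]; push_cast; ring))
  have n2 := bd z2 (hn z2 (-(1 + b)) (by rw [abs_le]; constructor <;> linarith) (by
    rw [hz2]; push_cast; ring))
  have main : Complex.exp (-(Complex.I * θ * b) + θ ^ 2 / 2) *
      (Complex.cos θ + Complex.I * b * Complex.sin θ) - 1 =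
      (((1 + b) / 2 : ℝ) : ℂ) * (Complex.exp z1 - (1 + z1 + z1 ^ 2 / 2)) +
      (((1 - b) / 2 : ℝ) : ℂ) * (Complex.exp z2 - (1 + z2 + z2 ^ 2 / 2)) +
      ((θ ^ 2 * b ^ 2 / 2 + θ ^ 4 / 8 : ℝ) : ℂ) := by
    rw [e1, e2, hz1, hz2]
    push_cast
    ring_nf
    simp only [Complex.I_sq]
    ring
  rw [main]
  refine (norm_add_le _ _).trans ((add_le_add_left (norm_add_le _ _) _).trans ?_)
  rw [norm_mul, norm_mul, Complex.norm_real, Complex.norm_real, Complex.norm_real,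
    Real.norm_of_nonneg (by linarith), Real.norm_of_nonneg (by linarith),
    Real.norm_of_nonneg (by positivity)]
  have h4 : θ ^ 4 ≤ |θ| ^ 3 := by
    have : θ ^ 4 = |θ| ^ 3 * |θ| := by
      rw [← pow_succ, Even.pow_abs (by decide)]
    rw [this]
    have : 0 ≤ |θ| ^ 3 := by positivity
    nlinarith
  have q1 : (1 + b) / 2 * ‖Complex.exp z1 - (1 + z1 + z1 ^ 2 / 2)‖ ≤ (1 + b) / 2 * (5 * |θ| ^ 3) :=
    mul_le_mul_of_nonneg_left n1 (by linarith)
  have q2 : (1 - b) / 2 * ‖Complex.exp z2 - (1 + z2 + z2 ^ 2 / 2)‖ ≤ (1 - b) / 2 * (5 * |θ| ^ 3) :=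
    mul_le_mul_of_nonneg_left n2 (by linarith)
  have : 0 ≤ θ ^ 2 * b ^ 2 := by positivity
  have : 0 ≤ |θ| ^ 3 := by positivity
  nlinarith

structure ERWSetup {m0 : MeasurableSpace Ω} (μ : Measure Ω) (ℱ : Filtration ℕ m0)
    (X s : ℕ → Ω → ℝ) (a : ℝ) : Prop where
  hX : ∀ n, 1 ≤ n → ∀ ω, X n ω = 1 ∨ X n ω = -1
  hXm : ∀ n, 1 ≤ n → Measurable[ℱ n] (X n)
  hcond : ∀ n, 1 ≤ n → μ[X (n + 1) | ℱ n] =ᵐ[μ] fun ω => a * s n ω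
  hsm : ∀ n, Measurable[ℱ n] (s n)
  hs1 : ∀ n ω, |s n ω| ≤ 1
  ha : |a| ≤ 1
  hs0 : ∀ ω, s 0 ω = 0

lemma erwAux_pull {m0 : MeasurableSpace Ω} {μ : Measure Ω} [IsProbabilityMeasure μ]
    {ℱ : Filtration ℕ m0} {X s : ℕ → Ω → ℝ} {a : ℝ} (h : ERWSetup μ ℱ X s a)
    {k : ℕ} (hk : 1 ≤ k) (G : Ω → ℂ) (hG : StronglyMeasurable[ℱ k] G) (R : ℝ)
    (hGR : ∀ᵐ ω ∂μ, ‖G ω‖ ≤ R) :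
    ∫ ω, G ω * (X (k + 1) ω : ℂ) ∂μ = ∫ ω, G ω * ((a * s k ω : ℝ) : ℂ) ∂μ := by
  have hXm : Measurable (X (k + 1)) := (h.hXm (k + 1) (by omega)).mono (ℱ.le _) le_rfl
  have hX1 : ∀ ω, |X (k + 1) ω| ≤ 1 := by
    intro ω; rcases h.hX (k + 1) (by omega) ω with h | h <;> simp [h]
  have hXi : Integrable (X (k + 1)) μ :=
    Integrable.of_bound hXm.aestronglyMeasurable 1 (ae_of_all _ hX1)
  have hGm : AEStronglyMeasurable G μ := (hG.mono (ℱ.le k)).aestronglyMeasurable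
  have hIntg : Integrable (fun ω => X (k + 1) ω • G ω) μ := by
    refine Integrable.of_bound (hXm.aestronglyMeasurable.smul hGm) R ?_
    filter_upwards [hGR] with ω hω
    rw [norm_smul, Real.norm_eq_abs]
    have := hX1 ω
    have := norm_nonneg (G ω)
    nlinarith
  have hGi : Integrable G μ := Integrable.of_bound hGm R hGR
  have := condExp_smul_of_aestronglyMeasurable_right (μ := μ) (m := ℱ k) (f := X (k + 1)) (g := G)
    hXi hIntg hG.aestronglyMeasurable
  have h2 : ∫ ω, X (k + 1) ω • G ω ∂μ = ∫ ω, (a * s k ω) • G ω ∂μ := by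
    rw [← integral_condExp (ℱ.le k)]
    refine integral_congr_ae ?_
    refine this.trans ?_
    filter_upwards [h.hcond k hk] with ω hω
    simp [hω]
  simp only [Complex.real_smul] at h2
  simpa only [mul_comm] using h2

set_option maxHeartbeats 1000000 in
lemma erwAux_step {m0 : MeasurableSpace Ω} {μ : Measure Ω} [IsProbabilityMeasure μ]
    {ℱ : Filtration ℕ m0} {X s : ℕ → Ω → ℝ} {a : ℝ} (h : ERWSetup μ ℱ X s a)
    {k : ℕ} (hk : 1 ≤ k) (G : Ω → ℂ) (hG : StronglyMeasurable[ℱ k] G) (R : ℝ)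
    (hGR : ∀ᵐ ω ∂μ, ‖G ω‖ ≤ R) (θ : Ω → ℝ) (hθm : Measurable[ℱ k] θ)
    (hθ : ∀ ω, |θ ω| ≤ 1 / 4) :
    ‖∫ ω, G ω * Complex.exp (Complex.I * (θ ω * (X (k + 1) ω - a * s k ω) : ℝ) +
        (θ ω ^ 2 / 2 : ℝ)) ∂μ - ∫ ω, G ω ∂μ‖ ≤
      20 * R * ∫ ω, (|θ ω| ^ 3 + θ ω ^ 2 * s k ω ^ 2) ∂μ := by
  set E : Ω → ℂ := fun ω => Complex.exp (-(Complex.I * θ ω * (a * s k ω : ℝ)) + θ ω ^ 2 / 2)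
    with hE
  have hsk := h.hsm k
  have hEm : Measurable[ℱ k] E := by
    have h1 : Measurable (fun q : ℝ × ℝ =>
        Complex.exp (-(Complex.I * q.1 * (a * q.2 : ℝ)) + q.1 ^ 2 / 2)) := by fun_prop
    have h2 : Measurable[ℱ k] (fun ω => (θ ω, s k ω)) := hθm.prodMk hsk
    have h3 := h1.comp h2
    exact h3
  have hcm : Measurable[ℱ k] (fun ω => Complex.cos (θ ω)) :=
    (by fun_prop : Measurable fun x : ℝ => Complex.cos x).comp hθm
  have hsinm : Measurable[ℱ k] (fun ω => Complex.I * Complex.sin (θ ω)) :=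
    (by fun_prop : Measurable fun x : ℝ => Complex.I * Complex.sin x).comp hθm
  have hEn : ∀ ω, ‖E ω‖ ≤ Real.exp 1 := by
    intro ω
    simp only [hE, Complex.norm_exp]
    refine Real.exp_le_exp.mpr ?_
    have : (-(Complex.I * θ ω * (a * s k ω : ℝ)) + (θ ω : ℂ) ^ 2 / 2) =
      ((θ ω ^ 2 / 2 : ℝ) : ℂ) + ((-(θ ω * (a * s k ω)) : ℝ) : ℂ) * Complex.I := by
      push_cast; ring
    rw [this]
    simp only [Complex.add_re, Complex.ofReal_re, Complex.re_ofReal_mul, Complex.I_re, mul_zero,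
      add_zero]
    have := sq_abs (θ ω)
    have := hθ ω
    have := abs_nonneg (θ ω)
    nlinarith
  have hcn : ∀ x : ℝ, ‖Complex.cos x‖ ≤ 1 := by
    intro x; rw [← Complex.ofReal_cos, Complex.norm_real]; exact Real.abs_cos_le_one x
  have hsn : ∀ x : ℝ, ‖Complex.I * Complex.sin x‖ ≤ 1 := by
    intro x
    rw [norm_mul, Complex.norm_I, one_mul, ← Complex.ofReal_sin, Complex.norm_real]
    exact Real.abs_sin_le_one x
  have hXm : Measurable (X (k + 1)) := (h.hXm (k + 1) (by omega)).mono (ℱ.le _) le_rfl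
  have hX1 : ∀ ω, |X (k + 1) ω| ≤ 1 := by
    intro ω; rcases h.hX (k + 1) (by omega) ω with h | h <;> simp [h]
  have hrew : ∀ ω, G ω * Complex.exp (Complex.I * (θ ω * (X (k + 1) ω - a * s k ω) : ℝ) +
        (θ ω ^ 2 / 2 : ℝ)) = G ω * E ω * Complex.cos (θ ω) +
        G ω * E ω * (Complex.I * Complex.sin (θ ω)) * (X (k + 1) ω : ℂ) := by
    intro ω
    have : Complex.exp (Complex.I * (θ ω * (X (k + 1) ω - a * s k ω) : ℝ) +
        (θ ω ^ 2 / 2 : ℝ)) = E ω * Complex.exp ((θ ω * X (k + 1) ω) * Complex.I) := by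
      rw [hE, ← Complex.exp_add]; congr 1; push_cast; ring
    rw [this, Complex.exp_mul_I]
    rcases h.hX (k + 1) (by omega) ω with h | h <;> simp [h] <;> ring
  have hR : 0 ≤ R := by
    obtain ⟨ω, hω⟩ := hGR.exists
    exact (norm_nonneg _).trans hω
  have hGE : StronglyMeasurable[ℱ k] (fun ω => G ω * E ω) := hG.mul hEm.stronglyMeasurable
  have hGEc : StronglyMeasurable[ℱ k] (fun ω => G ω * E ω * Complex.cos (θ ω)) :=
    hGE.mul hcm.stronglyMeasurable
  have hGEs : StronglyMeasurable[ℱ k] (fun ω => G ω * E ω * (Complex.I * Complex.sin (θ ω))) :=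
    hGE.mul hsinm.stronglyMeasurable
  have bdc : ∀ᵐ ω ∂μ, ‖G ω * E ω * Complex.cos (θ ω)‖ ≤ R * Real.exp 1 := by
    filter_upwards [hGR] with ω hω
    rw [norm_mul, norm_mul]
    calc _ ≤ R * Real.exp 1 * 1 := by
            gcongr
            · exact hEn ω
            · exact hcn _
      _ = _ := by ring
  have bds : ∀ᵐ ω ∂μ, ‖G ω * E ω * (Complex.I * Complex.sin (θ ω))‖ ≤ R * Real.exp 1 := by
    filter_upwards [hGR] with ω hω
    rw [norm_mul, norm_mul]
    calc _ ≤ R * Real.exp 1 * 1 := by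
            gcongr
            · exact hEn ω
            · exact hsn _
      _ = _ := by ring
  have ic : Integrable (fun ω => G ω * E ω * Complex.cos (θ ω)) μ :=
    Integrable.of_bound (hGEc.mono (ℱ.le k)).aestronglyMeasurable _ bdc
  have is0 : Integrable (fun ω => G ω * E ω * (Complex.I * Complex.sin (θ ω))) μ :=
    Integrable.of_bound (hGEs.mono (ℱ.le k)).aestronglyMeasurable _ bds
  have hXcm : AEStronglyMeasurable (fun ω => (X (k + 1) ω : ℂ)) μ :=
    (Complex.measurable_ofReal.comp hXm).aestronglyMeasurable
  have hsk0 : Measurable (s k) := hsk.mono (ℱ.le _) le_rfl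
  have hθ0 : Measurable θ := hθm.mono (ℱ.le _) le_rfl
  have hscm : AEStronglyMeasurable (fun ω => ((a * s k ω : ℝ) : ℂ)) μ :=
    (Complex.measurable_ofReal.comp (hsk0.const_mul a)).aestronglyMeasurable
  have hb1 : ∀ ω, |a * s k ω| ≤ 1 := by
    intro ω; rw [abs_mul]; exact mul_le_one₀ h.ha (abs_nonneg _) (h.hs1 k ω)
  have isX : Integrable (fun ω => G ω * E ω * (Complex.I * Complex.sin (θ ω)) *
      (X (k + 1) ω : ℂ)) μ :=
    is0.mul_bdd (c := 1) hXcm (ae_of_all _ fun ω => by simpa using hX1 ω)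
  have iss : Integrable (fun ω => G ω * E ω * (Complex.I * Complex.sin (θ ω)) *
      ((a * s k ω : ℝ) : ℂ)) μ :=
    is0.mul_bdd (c := 1) hscm (ae_of_all _ fun ω => by
      rw [Complex.norm_real]; exact hb1 ω)
  have iG : Integrable G μ :=
    Integrable.of_bound (hG.mono (ℱ.le k)).aestronglyMeasurable R hGR
  simp_rw [hrew]
  rw [integral_add ic isX, erwAux_pull h hk _ hGEs _ bds, ← integral_add ic iss,
    ← integral_sub (by exact ic.add iss) iG, ← integral_const_mul]
  refine norm_integral_le_of_norm_le ?_ ?_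
  · refine Integrable.const_mul ?_ _
    refine Integrable.of_bound (C := 2) ?_ (ae_of_all _ fun ω => ?_)
    · exact Measurable.aestronglyMeasurable (by fun_prop)
    · have h1 := hθ ω
      have h0 := abs_nonneg (θ ω)
      have h2 := h.hs1 k ω
      have h3 : |θ ω| ^ 3 ≤ 1 := pow_le_one₀ h0 (by linarith)
      have h4 : θ ω ^ 2 ≤ 1 := by rw [← sq_abs]; exact pow_le_one₀ h0 (by linarith)
      have h5 : s k ω ^ 2 ≤ 1 := by rw [← sq_abs]; exact pow_le_one₀ (abs_nonneg _) h2
      rw [Real.norm_of_nonneg (by positivity)]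
      nlinarith [sq_nonneg (θ ω), sq_nonneg (s k ω)]
  · filter_upwards [hGR] with ω hω
    have key := erwAux_key_bound (θ ω) (a * s k ω) (hθ ω) (hb1 ω)
    have : G ω * E ω * Complex.cos (θ ω) + G ω * E ω * (Complex.I * Complex.sin (θ ω)) *
        ((a * s k ω : ℝ) : ℂ) - G ω = G ω * (E ω * (Complex.cos (θ ω) +
        Complex.I * ((a * s k ω : ℝ) : ℂ) * Complex.sin (θ ω)) - 1) := by ring
    rw [this, norm_mul]
    have h1 : (a * s k ω) ^ 2 ≤ s k ω ^ 2 := by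
      rw [mul_pow]
      have : a ^ 2 ≤ 1 := by rw [← sq_abs]; exact pow_le_one₀ (abs_nonneg _) h.ha
      nlinarith [sq_nonneg (s k ω)]
    calc _ ≤ R * (20 * (|θ ω| ^ 3 + θ ω ^ 2 * (a * s k ω) ^ 2)) := by gcongr
      _ ≤ R * (20 * (|θ ω| ^ 3 + θ ω ^ 2 * s k ω ^ 2)) := by gcongr
      _ = _ := by ring

lemma erwAux_telescope {m0 : MeasurableSpace Ω} {μ : Measure Ω} [IsProbabilityMeasure μ]
    {ℱ : Filtration ℕ m0} {X s : ℕ → Ω → ℝ} {a : ℝ} (h : ERWSetup μ ℱ X s a)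
    {m : ℕ} (hm : 1 ≤ m) (θ : ℕ → Ω → ℝ) (hθm : ∀ k, m ≤ k → Measurable[ℱ k] (θ k))
    (hθ : ∀ k ω, |θ k ω| ≤ 1 / 4) (Y : Ω → ℝ) (hY : StronglyMeasurable[ℱ m] Y)
    (hY1 : ∀ᵐ ω ∂μ, |Y ω| ≤ 1) (K : ℝ) (n : ℕ) (hmn : m ≤ n)
    (hK : ∀ k ≤ n, ∀ ω, ∑ j ∈ Finset.Ico m k, θ j ω ^ 2 ≤ K) :
    ‖∫ ω, (Y ω : ℂ) * Complex.exp (Complex.I *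
        (∑ j ∈ Finset.Ico m n, θ j ω * (X (j + 1) ω - a * s j ω) : ℝ) +
        ((∑ j ∈ Finset.Ico m n, θ j ω ^ 2) / 2 : ℝ)) ∂μ - ∫ ω, (Y ω : ℂ) ∂μ‖ ≤
      20 * Real.exp (K / 2) *
        ∑ j ∈ Finset.Ico m n, ∫ ω, (|θ j ω| ^ 3 + θ j ω ^ 2 * s j ω ^ 2) ∂μ := by
  induction n, hmn using Nat.le_induction with
  | base => simp
  | succ n hmn ih =>
    have ih := ih (fun k hk => hK k (by omega))
    set G : Ω → ℂ := fun ω => (Y ω : ℂ) * Complex.exp (Complex.I *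
        (∑ j ∈ Finset.Ico m n, θ j ω * (X (j + 1) ω - a * s j ω) : ℝ) +
        ((∑ j ∈ Finset.Ico m n, θ j ω ^ 2) / 2 : ℝ)) with hGdef
    have hsum1 : Measurable[ℱ n]
        (fun ω => ∑ j ∈ Finset.Ico m n, θ j ω * (X (j + 1) ω - a * s j ω)) := by
      refine Finset.measurable_fun_sum _ fun j hj => ?_
      have hj := Finset.mem_Ico.mp hj
      have a1 : Measurable[ℱ n] (θ j) := (hθm j hj.1).mono (ℱ.mono (by omega)) le_rfl
      have a2 : Measurable[ℱ n] (X (j + 1)) :=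
        (h.hXm (j + 1) (by omega)).mono (ℱ.mono (by omega)) le_rfl
      have a3 : Measurable[ℱ n] (s j) := (h.hsm j).mono (ℱ.mono (by omega)) le_rfl
      exact a1.mul (a2.sub (a3.const_mul a))
    have hsum2 : Measurable[ℱ n] (fun ω => ∑ j ∈ Finset.Ico m n, θ j ω ^ 2) := by
      refine Finset.measurable_fun_sum _ fun j hj => ?_
      have hj := Finset.mem_Ico.mp hj
      have a1 : Measurable[ℱ n] (θ j) := (hθm j hj.1).mono (ℱ.mono (by omega)) le_rfl
      exact a1.pow_const 2
    have hGm : StronglyMeasurable[ℱ n] G := by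
      have h1 : Measurable (fun q : ℝ × ℝ =>
        Complex.exp (Complex.I * (q.1 : ℝ) + (q.2 / 2 : ℝ))) := by fun_prop
      have h2 : Measurable[ℱ n] (fun ω => (Y ω : ℂ)) :=
        Complex.measurable_ofReal.comp (hY.measurable.mono (ℱ.mono hmn) le_rfl)
      exact (h2.mul (h1.comp (hsum1.prodMk hsum2))).stronglyMeasurable
    have hGR : ∀ᵐ ω ∂μ, ‖G ω‖ ≤ Real.exp (K / 2) := by
      filter_upwards [hY1] with ω hω
      rw [hGdef]
      simp only [norm_mul, Complex.norm_real, Complex.norm_exp, Complex.add_re, Complex.ofReal_re,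
        Complex.mul_re, Complex.I_re, Complex.I_im, Complex.ofReal_im, zero_mul, mul_zero, sub_zero,
        zero_add, Real.norm_eq_abs]
      calc _ ≤ 1 * Real.exp (K / 2) := by
              gcongr
              exact hK n (by omega) ω
        _ = _ := one_mul _
    have st := erwAux_step h (by omega : 1 ≤ n) G hGm _ hGR (θ n) (hθm n hmn) (hθ n)
    have e : ∀ ω, (Y ω : ℂ) * Complex.exp (Complex.I *
        (∑ j ∈ Finset.Ico m (n + 1), θ j ω * (X (j + 1) ω - a * s j ω) : ℝ) +
        ((∑ j ∈ Finset.Ico m (n + 1), θ j ω ^ 2) / 2 : ℝ)) =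
        G ω * Complex.exp (Complex.I * (θ n ω * (X (n + 1) ω - a * s n ω) : ℝ) +
        (θ n ω ^ 2 / 2 : ℝ)) := by
      intro ω
      rw [hGdef, Finset.sum_Ico_succ_top hmn, Finset.sum_Ico_succ_top hmn]
      simp only
      rw [mul_assoc, ← Complex.exp_add]
      congr 2
      push_cast
      ring
    simp_rw [e]
    rw [Finset.sum_Ico_succ_top hmn]
    refine (norm_sub_le_norm_sub_add_norm_sub _ (∫ ω, G ω ∂μ) _).trans ?_
    linarith

structure ERWCoef (c : ℕ → ℝ) : Prop where
  nonneg : ∀ k, 0 ≤ c k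
  le_one : ∀ k, c k ≤ 1
  pos : ∀ k, 1 ≤ k → 0 < c k
  sum : Tendsto (fun n => ∑ k ∈ Finset.range n, c k ^ 2) atTop atTop
  zero : Tendsto c atTop (𝓝 0)

def ewB (c : ℕ → ℝ) (n : ℕ) : ℝ := ∑ k ∈ Finset.range n, c k ^ 2

def ewm (c : ℕ → ℝ) (n : ℕ) : ℕ := ⌊√√(ewB c n)⌋₊ + 1

def ewT (c x : ℕ → ℝ) (n : ℕ) : ℝ := |x (ewm c n) / c (ewm c n)|

def ewW (c x : ℕ → ℝ) (n k : ℕ) : ℝ :=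
  max (-2) (min 2 ((x k / c k) / ewT c x n)) * c k / √(ewB c n)

lemma ewB_nonneg (c : ℕ → ℝ) (n : ℕ) : 0 ≤ ewB c n := Finset.sum_nonneg fun _ _ => sq_nonneg _

lemma ewm_tendsto {c : ℕ → ℝ} (hc : ERWCoef c) : Tendsto (ewm c) atTop atTop := by
  have h : Tendsto (ewB c) atTop atTop := hc.sum
  exact (tendsto_add_atTop_nat 1).comp (tendsto_nat_floor_atTop.comp
    (Real.tendsto_sqrt_atTop.comp (Real.tendsto_sqrt_atTop.comp h)))

lemma ew_inv_sqrt {c : ℕ → ℝ} (hc : ERWCoef c) :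
    Tendsto (fun n => (√(ewB c n))⁻¹) atTop (𝓝 0) :=
  tendsto_inv_atTop_zero.comp (Real.tendsto_sqrt_atTop.comp hc.sum)

lemma ewm_div {c : ℕ → ℝ} (hc : ERWCoef c) :
    Tendsto (fun n => (ewm c n : ℝ) / √(ewB c n)) atTop (𝓝 0) := by
  have h : Tendsto (ewB c) atTop atTop := hc.sum
  have h2 : Tendsto (fun n => (√√(ewB c n))⁻¹ + (√(ewB c n))⁻¹) atTop (𝓝 0) := by
    simpa using (tendsto_inv_atTop_zero.comp
      (Real.tendsto_sqrt_atTop.comp (Real.tendsto_sqrt_atTop.comp h))).add (ew_inv_sqrt hc)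
  refine tendsto_of_tendsto_of_tendsto_of_le_of_le' tendsto_const_nhds h2
    (Eventually.of_forall fun n => by positivity) ?_
  filter_upwards [h.eventually_gt_atTop 0] with n hn
  have hs : 0 < √(ewB c n) := Real.sqrt_pos.mpr hn
  have hss : 0 < √√(ewB c n) := Real.sqrt_pos.mpr hs
  have hm : (ewm c n : ℝ) ≤ √√(ewB c n) + 1 := by
    unfold ewm; push_cast
    have := Nat.floor_le hss.le
    linarith
  rw [div_le_iff₀ hs]
  refine hm.trans (le_of_eq ?_)
  have : √(ewB c n) = √√(ewB c n) * √√(ewB c n) := (Real.mul_self_sqrt hs.le).symm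
  rw [add_mul, inv_mul_cancel₀ hs.ne']
  congr 1
  nth_rw 3 [this]
  field_simp

lemma ewm_le {c : ℕ → ℝ} (hc : ERWCoef c) : ∀ᶠ n in atTop, ewm c n ≤ n := by
  have h : Tendsto (ewB c) atTop atTop := hc.sum
  filter_upwards [(ewm_div hc).eventually_le_const (by norm_num : (0:ℝ) < 1),
    h.eventually_gt_atTop 0, eventually_ge_atTop 1] with n h1 h2 h3
  have hs : 0 < √(ewB c n) := Real.sqrt_pos.mpr h2
  rw [div_le_one hs] at h1
  have hB : ewB c n ≤ n := by
    unfold ewB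
    refine (Finset.sum_le_card_nsmul _ _ 1 fun k _ => ?_).trans (by simp)
    exact pow_le_one₀ (hc.nonneg k) (hc.le_one k)
  have hn : (1 : ℝ) ≤ n := by exact_mod_cast h3
  have : √(ewB c n) ≤ n := by
    rw [Real.sqrt_le_left (by linarith)]
    nlinarith
  exact_mod_cast h1.trans this

lemma ewW_abs {c : ℕ → ℝ} (hc : ERWCoef c) (x : ℕ → ℝ) (n k : ℕ) :
    |ewW c x n k| ≤ 2 * c k / √(ewB c n) := by
  unfold ewW
  rw [abs_div, abs_mul, abs_of_nonneg (hc.nonneg k), abs_of_nonneg (Real.sqrt_nonneg _)]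
  have := hc.nonneg k
  gcongr
  rw [abs_le]
  constructor
  · exact le_max_left _ _
  · exact max_le (by norm_num) (min_le_left _ _)

lemma ewW_sq {c : ℕ → ℝ} (hc : ERWCoef c) (x : ℕ → ℝ) (n k : ℕ) :
    ewW c x n k ^ 2 ≤ 4 * (c k ^ 2 / ewB c n) := by
  have := ewW_abs hc x n k
  rw [← sq_abs]
  calc _ ≤ (2 * c k / √(ewB c n)) ^ 2 := by gcongr
    _ = _ := by rw [div_pow, Real.sq_sqrt (ewB_nonneg c n)]; ring

lemma ewW_sum_sq {c : ℕ → ℝ} (hc : ERWCoef c) (x : ℕ → ℝ) (n k l : ℕ) (hk : k ≤ n) :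
    ∑ j ∈ Finset.Ico l k, ewW c x n j ^ 2 ≤ 4 := by
  calc _ ≤ ∑ j ∈ Finset.Ico l k, 4 * (c j ^ 2 / ewB c n) :=
        Finset.sum_le_sum fun j _ => ewW_sq hc x n j
    _ ≤ ∑ j ∈ Finset.range n, 4 * (c j ^ 2 / ewB c n) := by
        refine Finset.sum_le_sum_of_subset_of_nonneg ?_ fun j _ _ => ?_
        · intro j hj
          simp only [Finset.mem_Ico, Finset.mem_range] at *
          omega
        · have := ewB_nonneg c n
          positivity
    _ = 4 * (ewB c n / ewB c n) := by
        rw [← Finset.mul_sum, ← Finset.sum_div]; rfl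
    _ ≤ 4 := by
        have := div_self_le_one (ewB c n)
        linarith

lemma ew_path_T {c : ℕ → ℝ} (hc : ERWCoef c) {x : ℕ → ℝ} {l : ℝ}
    (hx : Tendsto (fun k => x k / c k) atTop (𝓝 l)) :
    Tendsto (ewT c x) atTop (𝓝 |l|) :=
  ((hx.comp (ewm_tendsto hc)).abs)

lemma ew_path_W {c : ℕ → ℝ} (hc : ERWCoef c) {x : ℕ → ℝ} {l : ℝ} (hl : l ≠ 0)
    (hx : Tendsto (fun k => x k / c k) atTop (𝓝 l)) :
    ∀ᶠ n in atTop, ∀ k, ewm c n ≤ k → ewW c x n k = x k / (ewT c x n * √(ewB c n)) := by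
  have hl' : 0 < |l| := abs_pos.mpr hl
  have h1 : ∀ᶠ k in atTop, |x k / c k| ≤ 4 / 3 * |l| :=
    hx.abs.eventually_le_const (by linarith)
  have h1' := eventually_forall_ge_atTop.mpr h1
  have h2 := (ewm_tendsto hc).eventually h1'
  filter_upwards [h2, (ew_path_T hc hx).eventually_const_le (by linarith : 2 / 3 * |l| < |l|)]
    with n hn hT k hk
  have hTpos : 0 < ewT c x n := by linarith
  have hck : 0 < c k := hc.pos k (le_trans (by unfold ewm; omega) hk)
  have hb : |(x k / c k) / ewT c x n| ≤ 2 := by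
    rw [abs_div, abs_of_pos hTpos, div_le_iff₀ hTpos]
    linarith [hn k hk]
  rw [abs_le] at hb
  unfold ewW
  rw [min_eq_right hb.2, max_eq_right hb.1]
  field_simp

lemma ew_path_D {c : ℕ → ℝ} (hc : ERWCoef c) {x : ℕ → ℝ} {l : ℝ}
    (hx : Tendsto (fun k => x k / c k) atTop (𝓝 l)) :
    Tendsto (fun n => (∑ k ∈ Finset.range n, x k ^ 2) / ewB c n) atTop (𝓝 (l ^ 2)) := by
  have h0 : (fun k => x k ^ 2 - l ^ 2 * c k ^ 2) =o[atTop] (fun k => c k ^ 2) := by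
    rw [Asymptotics.isLittleO_iff_tendsto']
    · have := (hx.pow 2).sub_const (l ^ 2)
      rw [sub_self] at this
      refine this.congr' ?_
      filter_upwards [eventually_ge_atTop 1] with k hk
      have := hc.pos k hk
      field_simp
    · filter_upwards [eventually_ge_atTop 1] with k hk h
      have := hc.pos k hk
      simp_all
  have h1 := h0.sum_range (fun k => sq_nonneg _) hc.sum
  have h2 := h1.tendsto_div_nhds_zero
  have h3 := h2.add_const (l ^ 2)
  rw [zero_add] at h3
  refine h3.congr' ?_
  have hB : Tendsto (ewB c) atTop atTop := hc.sum
  filter_upwards [hB.eventually_gt_atTop 0] with n hn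
  rw [Finset.sum_sub_distrib, ← Finset.mul_sum]
  change (_ - l ^ 2 * ewB c n) / ewB c n + l ^ 2 = _
  field_simp
  ring

lemma ew_path_Q {c : ℕ → ℝ} (hc : ERWCoef c) {x : ℕ → ℝ} {l : ℝ} (hl : l ≠ 0)
    (hx1 : ∀ k, |x k| ≤ 1) (hx : Tendsto (fun k => x k / c k) atTop (𝓝 l)) :
    Tendsto (fun n => ∑ k ∈ Finset.Ico (ewm c n) n, ewW c x n k ^ 2) atTop (𝓝 1) := by
  have hB : Tendsto (ewB c) atTop atTop := hc.sum
  have hDm : Tendsto (fun n => (∑ k ∈ Finset.range (ewm c n), x k ^ 2) / ewB c n)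
      atTop (𝓝 0) := by
    have : Tendsto (fun n => (ewm c n : ℝ) / √(ewB c n) * (√(ewB c n))⁻¹) atTop (𝓝 0) := by
      simpa using (ewm_div hc).mul (ew_inv_sqrt hc)
    refine tendsto_of_tendsto_of_tendsto_of_le_of_le tendsto_const_nhds this
      (fun n => div_nonneg (Finset.sum_nonneg fun _ _ => sq_nonneg _) (ewB_nonneg c n)) fun n => ?_
    have e : (ewm c n : ℝ) / √(ewB c n) * (√(ewB c n))⁻¹ = (ewm c n : ℝ) / ewB c n := by
      rw [← div_eq_mul_inv, div_div, Real.mul_self_sqrt (ewB_nonneg c n)]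
    rw [e]
    have := ewB_nonneg c n
    gcongr
    refine (Finset.sum_le_card_nsmul _ _ 1 fun k _ => ?_).trans (by simp)
    rw [← sq_abs]; exact pow_le_one₀ (abs_nonneg _) (hx1 k)
  have hlim := ((ew_path_D hc hx).sub hDm).div ((ew_path_T hc hx).pow 2)
    (by positivity)
  rw [sub_zero, sq_abs, div_self (by positivity)] at hlim
  refine hlim.congr' ?_
  filter_upwards [ew_path_W hc hl hx, ewm_le hc, hB.eventually_gt_atTop 0,
    (ew_path_T hc hx).eventually_const_lt (abs_pos.mpr hl)] with n hW hm hB hT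
  rw [Finset.sum_congr rfl fun k hk => by rw [hW k (Finset.mem_Ico.mp hk).1, div_pow, mul_pow,
    Real.sq_sqrt hB.le], ← Finset.sum_div, Finset.sum_Ico_eq_sub _ hm]
  simp only [Pi.div_apply]
  field_simp

lemma ew_path_R {c : ℕ → ℝ} (hc : ERWCoef c) {x : ℕ → ℝ} {l : ℝ} (hl : l ≠ 0)
    (hx : Tendsto (fun k => x k / c k) atTop (𝓝 l)) :
    Tendsto (fun n => √(ewB c n) * ewT c x n / √(∑ k ∈ Finset.range n, x k ^ 2)) atTop (𝓝 1) := by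
  have hB : Tendsto (ewB c) atTop atTop := hc.sum
  have h := (ew_path_T hc hx).div ((ew_path_D hc hx).sqrt) (by
    rw [Real.sqrt_sq_eq_abs]; positivity)
  rw [Real.sqrt_sq_eq_abs, div_self (by positivity)] at h
  refine h.congr' ?_
  filter_upwards [hB.eventually_gt_atTop 0] with n hB
  have : 0 < √(ewB c n) := Real.sqrt_pos.mpr hB
  simp only [Pi.div_apply]
  rw [Real.sqrt_div' _ hB.le]
  field_simp

lemma ew_path_res {c : ℕ → ℝ} (hc : ERWCoef c) {x y : ℕ → ℝ} {l : ℝ} (hl : l ≠ 0)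
    (hx1 : ∀ k, |x k| ≤ 1) (hy : ∀ k, 1 ≤ k → |y k| ≤ 2) (hx0 : x 0 = 0)
    (hx : Tendsto (fun k => x k / c k) atTop (𝓝 l)) :
    Tendsto (fun n => (∑ k ∈ Finset.range n, x k * y k) / √(∑ k ∈ Finset.range n, x k ^ 2) -
      √(ewB c n) * ewT c x n / √(∑ k ∈ Finset.range n, x k ^ 2) *
        ∑ k ∈ Finset.Ico (ewm c n) n, ewW c x n k * y k) atTop (𝓝 0) := by
  have hB : Tendsto (ewB c) atTop atTop := hc.sum
  have hT0 := ew_path_T hc hx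
  have h1 : Tendsto (fun n => 2 * ((ewm c n : ℝ) / √(ewB c n) *
    (√(ewB c n) * ewT c x n / √(∑ k ∈ Finset.range n, x k ^ 2)) / ewT c x n)) atTop (𝓝 0) := by
    simpa using (((ewm_div hc).mul (ew_path_R hc hl hx)).div hT0 (by positivity)).const_mul 2
  refine squeeze_zero_norm' ?_ h1
  filter_upwards [ew_path_W hc hl hx, ewm_le hc, hB.eventually_gt_atTop 0,
    hT0.eventually_const_lt (abs_pos.mpr hl)] with n hW hm hB hT
  have hs : 0 < √(ewB c n) := Real.sqrt_pos.mpr hB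
  have e1 : ∑ k ∈ Finset.Ico (ewm c n) n, ewW c x n k * y k =
      (∑ k ∈ Finset.range n, x k * y k - ∑ k ∈ Finset.range (ewm c n), x k * y k) /
        (ewT c x n * √(ewB c n)) := by
    rw [← Finset.sum_Ico_eq_sub _ hm, Finset.sum_div]
    refine Finset.sum_congr rfl fun k hk => ?_
    rw [hW k (Finset.mem_Ico.mp hk).1]; ring
  have e2 : |∑ k ∈ Finset.range (ewm c n), x k * y k| ≤ 2 * ewm c n := by
    refine (Finset.abs_sum_le_sum_abs _ _).trans ?_
    refine (Finset.sum_le_card_nsmul _ _ 2 fun k _ => ?_).trans (by simp [mul_comm])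
    rcases Nat.eq_zero_or_pos k with rfl | hk
    · simp [hx0]
    · rw [abs_mul]
      have := hx1 k; have := hy k hk; have := abs_nonneg (x k); have := abs_nonneg (y k)
      nlinarith
  rw [e1]
  set D := √(∑ k ∈ Finset.range n, x k ^ 2)
  have e3 : (∑ k ∈ Finset.range n, x k * y k) / D - √(ewB c n) * ewT c x n / D *
      ((∑ k ∈ Finset.range n, x k * y k - ∑ k ∈ Finset.range (ewm c n), x k * y k) /
        (ewT c x n * √(ewB c n))) = (∑ k ∈ Finset.range (ewm c n), x k * y k) / D := by
    rw [div_mul_div_comm, mul_comm D, mul_comm (ewT c x n), mul_div_mul_left _ _ (by positivity),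
      sub_div]
    ring
  rw [e3, norm_div, Real.norm_eq_abs, Real.norm_of_nonneg (Real.sqrt_nonneg _)]
  have e4 : 2 * ((ewm c n : ℝ) / √(ewB c n) * (√(ewB c n) * ewT c x n / D) / ewT c x n) =
      2 * ewm c n / D := by
    field_simp
  rw [e4]
  gcongr

lemma ewW_measurable {m0 : MeasurableSpace Ω} {μ : Measure Ω}
    {ℱ : Filtration ℕ m0} {X s : ℕ → Ω → ℝ} {a : ℝ} (h : ERWSetup μ ℱ X s a) (c : ℕ → ℝ)
    (n k : ℕ) (hk : ewm c n ≤ k) : Measurable[ℱ k] (fun ω => ewW c (fun j => s j ω) n k) := by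
  have h1 : Measurable[ℱ k] (s (ewm c n)) := (h.hsm _).mono (ℱ.mono hk) le_rfl
  have h2 : Measurable[ℱ k] (s k) := h.hsm k
  have h3 : Measurable[ℱ k] (fun ω => ((s (ewm c n) ω, s k ω) : ℝ × ℝ)) := h1.prodMk h2
  have h4 : Measurable (fun q : ℝ × ℝ =>
      max (-2) (min 2 ((q.2 / c k) / |q.1 / c (ewm c n)|)) * c k / √(ewB c n)) := by
    fun_prop
  have h5 := h4.comp h3
  exact h5

def ewN (X s : ℕ → Ω → ℝ) (a : ℝ) (c : ℕ → ℝ) (n : ℕ) (ω : Ω) : ℝ :=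
  ∑ k ∈ Finset.Ico (ewm c n) n, ewW c (fun j => s j ω) n k * (X (k + 1) ω - a * s k ω)

def ewQ (s : ℕ → Ω → ℝ) (c : ℕ → ℝ) (n : ℕ) (ω : Ω) : ℝ :=
  ∑ k ∈ Finset.Ico (ewm c n) n, ewW c (fun j => s j ω) n k ^ 2

lemma ewN_measurable {m0 : MeasurableSpace Ω} {μ : Measure Ω}
    {ℱ : Filtration ℕ m0} {X s : ℕ → Ω → ℝ} {a : ℝ} (h : ERWSetup μ ℱ X s a) (c : ℕ → ℝ)
    (n : ℕ) : Measurable (ewN X s a c n) := by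
  refine Finset.measurable_fun_sum _ fun k hk => ?_
  have hk := (Finset.mem_Ico.mp hk).1
  have a1 : Measurable (fun ω => ewW c (fun j => s j ω) n k) :=
    (ewW_measurable h c n k hk).mono (ℱ.le _) le_rfl
  have a2 : Measurable (X (k + 1)) := (h.hXm (k + 1) (by omega)).mono (ℱ.le _) le_rfl
  have a3 : Measurable (s k) := (h.hsm k).mono (ℱ.le _) le_rfl
  exact a1.mul (a2.sub (a3.const_mul a))

lemma ewQ_measurable {m0 : MeasurableSpace Ω} {μ : Measure Ω}
    {ℱ : Filtration ℕ m0} {X s : ℕ → Ω → ℝ} {a : ℝ} (h : ERWSetup μ ℱ X s a) (c : ℕ → ℝ)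
    (n : ℕ) : Measurable (ewQ s c n) := by
  refine Finset.measurable_fun_sum _ fun k hk => ?_
  have hk := (Finset.mem_Ico.mp hk).1
  have a1 : Measurable (fun ω => ewW c (fun j => s j ω) n k) :=
    (ewW_measurable h c n k hk).mono (ℱ.le _) le_rfl
  exact a1.pow_const 2

/-- The error term in the telescoping estimate tends to zero. -/
lemma ew_err {m0 : MeasurableSpace Ω} {μ : Measure Ω} [IsProbabilityMeasure μ]
    {ℱ : Filtration ℕ m0} {X s : ℕ → Ω → ℝ} {a : ℝ} (h : ERWSetup μ ℱ X s a) {c : ℕ → ℝ}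
    (hc : ERWCoef c) (hs0 : ∀ᵐ ω ∂μ, Tendsto (fun k => s k ω) atTop (𝓝 0)) (t : ℝ) :
    Tendsto (fun n => ∑ j ∈ Finset.Ico (ewm c n) n,
      ∫ ω, (|t * ewW c (fun j => s j ω) n j| ^ 3 +
        (t * ewW c (fun j => s j ω) n j) ^ 2 * s j ω ^ 2) ∂μ) atTop (𝓝 0) := by
  have hB : Tendsto (ewB c) atTop atTop := hc.sum
  set e : ℕ → ℝ := fun j => ∫ ω, s j ω ^ 2 ∂μ with he
  have hsm : ∀ j, Measurable (s j) := fun j => (h.hsm j).mono (ℱ.le _) le_rfl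
  have hsq : ∀ j ω, s j ω ^ 2 ≤ 1 := fun j ω => by
    rw [← sq_abs]; exact pow_le_one₀ (abs_nonneg _) (h.hs1 j ω)
  have hsi : ∀ j, Integrable (fun ω => s j ω ^ 2) μ := fun j =>
    Integrable.of_bound ((hsm j).pow_const 2).aestronglyMeasurable 1 (ae_of_all _ fun ω => by
      rw [Real.norm_of_nonneg (sq_nonneg _)]; exact hsq j ω)
  have he0 : Tendsto e atTop (𝓝 0) := by
    have := tendsto_integral_of_dominated_convergence (μ := μ) (F := fun j ω => s j ω ^ 2)
      (f := fun _ => 0) (fun _ => 1) (fun j => ((hsm j).pow_const 2).aestronglyMeasurable)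
      (integrable_const _) (fun j => ae_of_all _ fun ω => by
        rw [Real.norm_of_nonneg (sq_nonneg _)]; exact hsq j ω)
      (by filter_upwards [hs0] with ω hω; simpa using hω.pow 2)
    simpa using this
  have hen : ∀ j, 0 ≤ e j := fun j => integral_nonneg fun ω => sq_nonneg _
  have hces : Tendsto (fun n => (∑ j ∈ Finset.range n, c j ^ 2 * e j) / ewB c n) atTop (𝓝 0) := by
    have h0 : (fun j => c j ^ 2 * e j) =o[atTop] (fun j => c j ^ 2) := by
      have := (Asymptotics.isBigO_refl (fun j => c j ^ 2) atTop).mul_isLittleO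
        ((Asymptotics.isLittleO_one_iff ℝ).mpr he0)
      simpa using this
    exact (h0.sum_range (fun k => sq_nonneg _) hc.sum).tendsto_div_nhds_zero
  have hlim : Tendsto (fun n => 8 * |t| ^ 3 * (√(ewB c n))⁻¹ +
      4 * t ^ 2 * ((∑ j ∈ Finset.range n, c j ^ 2 * e j) / ewB c n)) atTop (𝓝 0) := by
    simpa using ((ew_inv_sqrt hc).const_mul (8 * |t| ^ 3)).add (hces.const_mul (4 * t ^ 2))
  refine tendsto_of_tendsto_of_tendsto_of_le_of_le' tendsto_const_nhds hlim
    (Eventually.of_forall fun n => Finset.sum_nonneg fun j _ => integral_nonneg fun ω => ?_) ?_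
  · positivity
  filter_upwards [hB.eventually_gt_atTop 0] with n hn
  have hs : 0 < √(ewB c n) := Real.sqrt_pos.mpr hn
  have key : ∀ j, ∫ ω, (|t * ewW c (fun j => s j ω) n j| ^ 3 +
        (t * ewW c (fun j => s j ω) n j) ^ 2 * s j ω ^ 2) ∂μ ≤
      8 * |t| ^ 3 * (√(ewB c n))⁻¹ * (c j ^ 2 / ewB c n) +
        4 * t ^ 2 * (c j ^ 2 * e j / ewB c n) := by
    intro j
    have hr : 8 * |t| ^ 3 * (√(ewB c n))⁻¹ * (c j ^ 2 / ewB c n) +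
        4 * t ^ 2 * (c j ^ 2 * e j / ewB c n) =
        ∫ ω, (8 * |t| ^ 3 * (√(ewB c n))⁻¹ * (c j ^ 2 / ewB c n) +
          4 * t ^ 2 * (c j ^ 2 / ewB c n) * s j ω ^ 2) ∂μ := by
      rw [integral_add (integrable_const _) ((hsi j).const_mul _),
        integral_const_mul (4 * t ^ 2 * (c j ^ 2 / ewB c n)) (fun ω => s j ω ^ 2)]
      simp only [integral_const, probReal_univ, one_smul]
      change _ = _ + _ * e j
      ring
    rw [hr]
    refine integral_mono_of_nonneg (ae_of_all _ fun ω => ?_)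
      ((integrable_const _).add ((hsi j).const_mul _)) (ae_of_all _ fun ω => ?_)
    · simp only [Pi.zero_apply]; positivity
    · have hW := ewW_abs hc (fun j => s j ω) n j
      have hW2 := ewW_sq hc (fun j => s j ω) n j
      set w := ewW c (fun j => s j ω) n j
      have hw1 : |w| ≤ 2 * (√(ewB c n))⁻¹ := by
        refine hW.trans ?_
        rw [div_eq_mul_inv]
        gcongr
        linarith [hc.le_one j]
      have hcB : 0 ≤ c j ^ 2 / ewB c n := by positivity
      have p1 : |t * w| ^ 3 ≤ 8 * |t| ^ 3 * (√(ewB c n))⁻¹ * (c j ^ 2 / ewB c n) := by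
        calc |t * w| ^ 3 = |t| ^ 3 * (|w| * w ^ 2) := by rw [abs_mul, ← sq_abs w]; ring
          _ ≤ |t| ^ 3 * (2 * (√(ewB c n))⁻¹ * (4 * (c j ^ 2 / ewB c n))) := by gcongr
          _ = _ := by ring
      have p2 : (t * w) ^ 2 * s j ω ^ 2 ≤ 4 * t ^ 2 * (c j ^ 2 / ewB c n) * s j ω ^ 2 := by
        calc (t * w) ^ 2 * s j ω ^ 2 = t ^ 2 * w ^ 2 * s j ω ^ 2 := by ring
          _ ≤ t ^ 2 * (4 * (c j ^ 2 / ewB c n)) * s j ω ^ 2 := by gcongr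
          _ = _ := by ring
      exact add_le_add p1 p2
  refine (Finset.sum_le_sum fun j _ => key j).trans ?_
  have hsub : Finset.Ico (ewm c n) n ⊆ Finset.range n := by
    intro j hj; simp only [Finset.mem_Ico, Finset.mem_range] at *; omega
  refine (Finset.sum_le_sum_of_subset_of_nonneg hsub fun j _ _ => ?_).trans (le_of_eq ?_)
  · have := hen j
    positivity
  · rw [Finset.sum_add_distrib, ← Finset.mul_sum, ← Finset.mul_sum, ← Finset.sum_div,
      ← Finset.sum_div]
    change _ * (ewB c n / ewB c n) + _ = _
    rw [div_self hn.ne', mul_one]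

lemma ew_char {m0 : MeasurableSpace Ω} {μ : Measure Ω} [IsProbabilityMeasure μ]
    {ℱ : Filtration ℕ m0} {X s : ℕ → Ω → ℝ} {a : ℝ} (h : ERWSetup μ ℱ X s a) {c : ℕ → ℝ}
    (hc : ERWCoef c) (hs0 : ∀ᵐ ω ∂μ, Tendsto (fun k => s k ω) atTop (𝓝 0))
    (A : Set Ω) (hA : MeasurableSet[⨆ n, ℱ n] A)
    (hAl : ∀ᵐ ω ∂μ, ω ∈ A → ∃ l : ℝ, l ≠ 0 ∧ Tendsto (fun k => s k ω / c k) atTop (𝓝 l)) (t : ℝ) :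
    Tendsto (fun n => ∫ ω in A, Complex.exp (Complex.I * (t * ewN X s a c n ω : ℝ)) ∂μ) atTop
      (𝓝 (μ.real A * (Real.exp (-(t ^ 2 / 2)) : ℝ))) := by
  have hle : ⨆ n, ℱ n ≤ m0 := iSup_le fun n => ℱ.le n
  have hA0 : MeasurableSet A := hle _ hA
  set g : Ω → ℝ := A.indicator (fun _ => 1) with hg
  have hgm : StronglyMeasurable[⨆ n, ℱ n] g := stronglyMeasurable_const.indicator hA
  have hgm0 : Measurable g := measurable_const.indicator hA0
  have hg1 : ∀ ω, |g ω| ≤ 1 := by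
    intro ω; by_cases hω : ω ∈ A <;> simp [hg, hω]
  have hgi : Integrable g μ := Integrable.of_bound hgm0.aestronglyMeasurable 1 (ae_of_all _ hg1)
  set Y : ℕ → Ω → ℝ := fun n => μ[g | ℱ (ewm c n)] with hY
  have hY1 : ∀ n, ∀ᵐ ω ∂μ, |Y n ω| ≤ 1 := fun n => by
    have := ae_bdd_abs_condExp_of_ae_bdd_abs (m := ℱ (ewm c n)) (μ := μ) (R := (1 : ℝ))
      (f := g) (ae_of_all _ (by simpa using hg1))
    simpa using this
  have hYm : ∀ n, StronglyMeasurable[ℱ (ewm c n)] (Y n) := fun n => stronglyMeasurable_condExp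
  have hYm0 : ∀ n, Measurable (Y n) := fun n => ((hYm n).mono (ℱ.le _)).measurable
  have hYi : ∀ n, Integrable (Y n) μ := fun n => integrable_condExp
  have hYg : ∀ᵐ ω ∂μ, Tendsto (fun n => Y n ω) atTop (𝓝 (g ω)) := by
    filter_upwards [hgi.tendsto_ae_condExp hgm] with ω hω
    exact hω.comp (ewm_tendsto hc)
  have hNm := fun n => ewN_measurable h c n
  have hQm := fun n => ewQ_measurable h c n
  have hQ4 : ∀ n ω, ewQ s c n ω ≤ 4 := fun n ω => ewW_sum_sq hc _ n n _ le_rfl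
  set U : ℕ → Ω → ℂ := fun n ω => Complex.exp (Complex.I * (t * ewN X s a c n ω : ℝ)) with hU
  have hUm : ∀ n, Measurable (U n) := fun n => by
    have := hNm n
    simp only [hU]; fun_prop
  have hU1 : ∀ n ω, ‖U n ω‖ = 1 := fun n ω => by
    simp only [hU]; rw [mul_comm, Complex.norm_exp_ofReal_mul_I]
  set P : ℕ → Ω → ℝ := fun n ω => Real.exp (t ^ 2 * ewQ s c n ω / 2) with hP
  have hPm : ∀ n, Measurable (P n) := fun n => by
    have := hQm n
    simp only [hP]; fun_prop
  set C : ℝ := Real.exp (4 * t ^ 2 / 2) with hC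
  have hPC : ∀ n ω, P n ω ≤ C := fun n ω => by
    refine Real.exp_le_exp.mpr ?_
    have := hQ4 n ω
    nlinarith [sq_nonneg t]
  have hP0 : ∀ n ω, 0 ≤ P n ω := fun n ω => (Real.exp_pos _).le
  have hC0 : Real.exp (t ^ 2 / 2) ≤ C := Real.exp_le_exp.mpr (by nlinarith [sq_nonneg t])
  have hCpos : 0 < C := Real.exp_pos _
  -- first term
  have h1 : Tendsto (fun n => ∫ ω, (g ω : ℂ) * U n ω * ((Real.exp (t ^ 2 / 2) - P n ω : ℝ) : ℂ) ∂μ)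
      atTop (𝓝 0) := by
    have := tendsto_integral_of_dominated_convergence (μ := μ)
      (F := fun n ω => (g ω : ℂ) * U n ω * ((Real.exp (t ^ 2 / 2) - P n ω : ℝ) : ℂ))
      (f := fun _ => 0) (fun _ => 2 * C) (fun n => by
        have := hUm n; have := hPm n
        exact Measurable.aestronglyMeasurable (by fun_prop)) (integrable_const _)
      (fun n => ae_of_all _ fun ω => by
        rw [norm_mul, norm_mul, hU1, Complex.norm_real, Complex.norm_real, Real.norm_eq_abs,
          Real.norm_eq_abs, mul_one]
        have q1 : |Real.exp (t ^ 2 / 2) - P n ω| ≤ 2 * C := by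
          rw [abs_le]
          have := hP0 n ω; have := hPC n ω; have := Real.exp_pos (t ^ 2 / 2)
          constructor <;> linarith
        calc _ ≤ 1 * (2 * C) := by gcongr; exact hg1 ω
          _ = _ := one_mul _)
      (by
        filter_upwards [hAl] with ω hω
        by_cases hωA : ω ∈ A
        · obtain ⟨l, hl, hx⟩ := hω hωA
          have hQ : Tendsto (fun n => ewQ s c n ω) atTop (𝓝 1) :=
            ew_path_Q hc hl (fun k => h.hs1 k ω) hx
          have hPl : Tendsto (fun n => Real.exp (t ^ 2 / 2) - P n ω) atTop (𝓝 0) := by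
            have : Tendsto (fun n => P n ω) atTop (𝓝 (Real.exp (t ^ 2 * 1 / 2))) :=
              (Real.continuous_exp.tendsto _).comp ((hQ.const_mul _).div_const _)
            have h' := this.const_sub (Real.exp (t ^ 2 / 2))
            rwa [mul_one, sub_self] at h'
          refine squeeze_zero_norm (fun n => ?_) (by simpa using hPl.abs)
          rw [norm_mul, norm_mul, hU1, Complex.norm_real, Complex.norm_real, Real.norm_eq_abs,
          Real.norm_eq_abs, mul_one]
          have := hg1 ω
          have := abs_nonneg (Real.exp (t ^ 2 / 2) - P n ω)
          nlinarith
        · simp [hg, hωA])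
    simpa using this
  -- second term
  have h2 : Tendsto (fun n => ∫ ω, ((g ω - Y n ω : ℝ) : ℂ) * (U n ω * (P n ω : ℂ)) ∂μ)
      atTop (𝓝 0) := by
    have := tendsto_integral_of_dominated_convergence (μ := μ)
      (F := fun n ω => ((g ω - Y n ω : ℝ) : ℂ) * (U n ω * (P n ω : ℂ)))
      (f := fun _ => 0) (fun _ => 2 * C) (fun n => by
        have := hUm n; have := hPm n; have := hYm0 n
        exact Measurable.aestronglyMeasurable (by fun_prop)) (integrable_const _)
      (fun n => by
        filter_upwards [hY1 n] with ω hω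
        rw [norm_mul, norm_mul, hU1, Complex.norm_real, Complex.norm_real, Real.norm_eq_abs,
          Real.norm_eq_abs, one_mul, abs_of_nonneg (hP0 n ω)]
        have q1 : |g ω - Y n ω| ≤ 2 := (abs_sub _ _).trans (by linarith [hg1 ω])
        have := hP0 n ω
        gcongr
        exact hPC n ω)
      (by
        filter_upwards [hYg] with ω hω
        have hz : Tendsto (fun n => |g ω - Y n ω| * C) atTop (𝓝 0) := by
          simpa using (hω.const_sub (g ω)).abs.mul_const C
        refine squeeze_zero_norm (fun n => ?_) hz
        rw [norm_mul, norm_mul, hU1, Complex.norm_real, Complex.norm_real, Real.norm_eq_abs,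
          Real.norm_eq_abs, one_mul, abs_of_nonneg (hP0 n ω)]
        gcongr
        exact hPC n ω)
    simpa using this
  -- third term
  have h3 : Tendsto (fun n => ∫ ω, (Y n ω : ℂ) * (U n ω * (P n ω : ℂ)) ∂μ - ∫ ω, (Y n ω : ℂ) ∂μ)
      atTop (𝓝 0) := by
    have hb := (ew_err h hc hs0 t).const_mul (20 * Real.exp (4 * t ^ 2 / 2))
    rw [mul_zero] at hb
    refine squeeze_zero_norm' ?_ hb
    have hsmall : ∀ᶠ n in atTop, |t| * (2 * (√(ewB c n))⁻¹) ≤ 1 / 4 := by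
      have : Tendsto (fun n => |t| * (2 * (√(ewB c n))⁻¹)) atTop (𝓝 0) := by
        simpa using ((ew_inv_sqrt hc).const_mul 2).const_mul |t|
      exact this.eventually_le_const (by norm_num)
    filter_upwards [ewm_le hc, hsmall] with n hn hsm
    have := erwAux_telescope h (m := ewm c n) (by unfold ewm; omega)
      (fun k ω => t * ewW c (fun j => s j ω) n k)
      (fun k hk => (ewW_measurable h c n k hk).const_mul t)
      (fun k ω => by
        rw [abs_mul]
        refine le_trans ?_ hsm
        gcongr
        refine (ewW_abs hc _ n k).trans ?_
        rw [div_eq_mul_inv]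
        gcongr
        linarith [hc.le_one k])
      (Y n) (hYm n) (hY1 n) (4 * t ^ 2) n hn (fun k hk ω => by
        simp_rw [mul_pow]
        rw [← Finset.mul_sum]
        have := ewW_sum_sq hc (fun j => s j ω) n k (ewm c n) hk
        nlinarith [sq_nonneg t])
    refine le_trans (le_of_eq ?_) this
    congr 3
    funext ω
    simp only [hU, hP, ewN, ewQ]
    rw [Complex.ofReal_exp, ← Complex.exp_add, Finset.mul_sum, Finset.mul_sum]
    simp only [mul_pow, mul_assoc]
  have hYint : ∀ n, ∫ ω, (Y n ω : ℂ) ∂μ = (μ.real A : ℂ) := fun n => by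
    rw [integral_complex_ofReal]
    congr 1
    rw [hY, integral_condExp (ℱ.le _), hg, integral_indicator hA0]
    simp
  have hsum : ∀ n, (Real.exp (t ^ 2 / 2) : ℂ) * ∫ ω in A, U n ω ∂μ =
      ∫ ω, (g ω : ℂ) * U n ω * ((Real.exp (t ^ 2 / 2) - P n ω : ℝ) : ℂ) ∂μ +
      ∫ ω, ((g ω - Y n ω : ℝ) : ℂ) * (U n ω * (P n ω : ℂ)) ∂μ +
      (∫ ω, (Y n ω : ℂ) * (U n ω * (P n ω : ℂ)) ∂μ - ∫ ω, (Y n ω : ℂ) ∂μ) + (μ.real A : ℂ) := by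
    intro n
    have mU := hUm n; have mP := hPm n; have mY := hYm0 n
    have i1 : Integrable (fun ω => (g ω : ℂ) * U n ω * ((Real.exp (t ^ 2 / 2) - P n ω : ℝ) : ℂ)) μ := by
      refine Integrable.of_bound (C := 2 * C) (Measurable.aestronglyMeasurable (by fun_prop))
        (ae_of_all _ fun ω => ?_)
      rw [norm_mul, norm_mul, hU1, Complex.norm_real, Complex.norm_real, Real.norm_eq_abs,
          Real.norm_eq_abs, mul_one]
      have q1 : |Real.exp (t ^ 2 / 2) - P n ω| ≤ 2 * C := by
        rw [abs_le]
        have := hP0 n ω; have := hPC n ω; have := Real.exp_pos (t ^ 2 / 2)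
        constructor <;> linarith
      calc _ ≤ 1 * (2 * C) := by gcongr; exact hg1 ω
        _ = _ := one_mul _
    have iUP : ∀ f : Ω → ℝ, Integrable f μ → Integrable (fun ω => (f ω : ℂ) * (U n ω * (P n ω : ℂ))) μ := by
      intro f hf
      refine hf.ofReal.mul_bdd (c := C) (Measurable.aestronglyMeasurable (by fun_prop))
        (ae_of_all _ fun ω => ?_)
      rw [norm_mul, hU1, Complex.norm_real, Real.norm_eq_abs, one_mul, abs_of_nonneg (hP0 n ω)]
      exact hPC n ω
    have i2 := iUP (fun ω => g ω - Y n ω) (hgi.sub (hYi n))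
    have i3 := iUP (Y n) (hYi n)
    rw [hYint, add_assoc, sub_add_cancel, ← integral_add i1 i2, ← integral_add (by exact i1.add i2) i3,
      ← integral_const_mul, ← integral_indicator hA0]
    refine integral_congr_ae (ae_of_all _ fun ω => ?_)
    simp only [hg]
    by_cases hω : ω ∈ A
    · simp only [hω, Set.indicator_of_mem]
      push_cast
      ring
    · simp only [hω, not_false_eq_true, Set.indicator_of_notMem]
      push_cast
      ring
  have hfin := ((h1.add h2).add h3).add_const (μ.real A : ℂ)
  have hfin2 := (hfin.congr fun n => (hsum n).symm).const_mul (Real.exp (-(t ^ 2 / 2)) : ℂ)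
  have e0 : (Real.exp (-(t ^ 2 / 2)) : ℂ) * (Real.exp (t ^ 2 / 2) : ℂ) = 1 := by
    rw [← Complex.ofReal_mul, ← Real.exp_add]; simp
  refine (hfin2.congr fun n => ?_).trans (le_of_eq ?_)
  · rw [← mul_assoc, e0, one_mul]
  · rw [add_zero, add_zero, zero_add, mul_comm]

lemma ew_charFun_cond {m0 : MeasurableSpace Ω} {μ : Measure Ω} [IsProbabilityMeasure μ]
    (A : Set Ω) (N : Ω → ℝ) (hN : Measurable N) (t : ℝ) :
    charFun ((μ[|A]).map N) t =
      ((μ.real A)⁻¹ : ℝ) * ∫ ω in A, Complex.exp (Complex.I * (t * N ω : ℝ)) ∂μ := by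
  rw [charFun_apply_real, integral_map hN.aemeasurable
    (Measurable.aestronglyMeasurable (by fun_prop)), ProbabilityTheory.cond, integral_smul_measure,
    Complex.real_smul, ENNReal.toReal_inv]
  congr 1
  refine integral_congr_ae (ae_of_all _ fun ω => ?_)
  simp only
  congr 1
  push_cast
  ring

lemma ew_clt {m0 : MeasurableSpace Ω} {μ : Measure Ω} [IsProbabilityMeasure μ]
    {ℱ : Filtration ℕ m0} {X s : ℕ → Ω → ℝ} {a : ℝ} (h : ERWSetup μ ℱ X s a) {c : ℕ → ℝ}
    (hc : ERWCoef c) (hs0 : ∀ᵐ ω ∂μ, Tendsto (fun k => s k ω) atTop (𝓝 0))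
    (A : Set Ω) (hA : MeasurableSet[⨆ n, ℱ n] A)
    (hAl : ∀ᵐ ω ∂μ, ω ∈ A → ∃ l : ℝ, l ≠ 0 ∧ Tendsto (fun k => s k ω / c k) atTop (𝓝 l))
    (hApos : μ A ≠ 0) (f : ℝ →ᵇ ℝ) :
    Tendsto (fun n => ∫ ω, f ((∑ k ∈ Finset.range n, s k ω * (X (k + 1) ω - a * s k ω)) /
      √(∑ k ∈ Finset.range n, s k ω ^ 2)) ∂(μ[|A])) atTop (𝓝 (∫ x, f x ∂(gaussianReal 0 1))) := by
  have hle : ⨆ n, ℱ n ≤ m0 := iSup_le fun n => ℱ.le n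
  have hA0 : MeasurableSet A := hle _ hA
  have : IsProbabilityMeasure (μ[|A]) := cond_isProbabilityMeasure hApos
  have hAr : μ.real A ≠ 0 := by
    rw [Measure.real, ENNReal.toReal_ne_zero]; exact ⟨hApos, measure_ne_top _ _⟩
  have hNm := fun n => ewN_measurable h c n
  have hN : TendstoInDistribution (ewN X s a c) atTop (id : ℝ → ℝ) (fun _ => μ[|A])
      (gaussianReal 0 1) := by
    refine ⟨fun n => (hNm n).aemeasurable, aemeasurable_id, ?_⟩
    refine ProbabilityMeasure.tendsto_iff_tendsto_charFun.2 fun t => ?_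
    simp only [ProbabilityMeasure.coe_mk, Measure.map_id]
    rw [charFun_gaussianReal]
    have h1 := (ew_char h hc hs0 A hA hAl t).const_mul (((μ.real A)⁻¹ : ℝ) : ℂ)
    refine (h1.congr fun n => (ew_charFun_cond A _ (hNm n) t).symm).trans (le_of_eq ?_)
    congr 1
    rw [← mul_assoc, ← Complex.ofReal_mul, inv_mul_cancel₀ hAr]
    push_cast
    simp
  have hae : ∀ᵐ ω ∂(μ[|A]), ∃ l : ℝ, l ≠ 0 ∧ Tendsto (fun k => s k ω / c k) atTop (𝓝 l) := by
    have h1 : ∀ᵐ ω ∂(μ[|A]), ω ∈ A := by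
      exact ProbabilityTheory.ae_cond_mem hA0
    have h2 := (ProbabilityTheory.cond_absolutelyContinuous (μ := μ) (s := A)).ae_le hAl
    filter_upwards [h1, h2] with ω p q using q p
  have hsm : ∀ j, Measurable (s j) := fun j => (h.hsm j).mono (ℱ.le _) le_rfl
  have hXm : ∀ j, Measurable (X (j + 1)) := fun j => (h.hXm (j + 1) (by omega)).mono (ℱ.le _) le_rfl
  have hDm : ∀ n, Measurable (fun ω => √(∑ k ∈ Finset.range n, s k ω ^ 2)) := fun n => by
    fun_prop
  have hTm : ∀ n, Measurable (fun ω => ewT c (fun j => s j ω) n) := fun n => by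
    unfold ewT; fun_prop
  have hHm : ∀ n, Measurable (fun ω => (∑ k ∈ Finset.range n, s k ω * (X (k + 1) ω - a * s k ω)) /
      √(∑ k ∈ Finset.range n, s k ω ^ 2)) := fun n => by
    fun_prop
  set H : ℕ → Ω → ℝ := fun n ω => (∑ k ∈ Finset.range n, s k ω * (X (k + 1) ω - a * s k ω)) /
      √(∑ k ∈ Finset.range n, s k ω ^ 2) with hH
  set R : ℕ → Ω → ℝ := fun n ω => √(ewB c n) * ewT c (fun j => s j ω) n /
    √(∑ k ∈ Finset.range n, s k ω ^ 2) with hR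
  have hRm : ∀ n, Measurable (R n) := fun n => ((hTm n).const_mul _).div (hDm n)
  have hRt : TendstoInMeasure (μ[|A]) R atTop (fun _ => 1) := by
    refine tendstoInMeasure_of_tendsto_ae (fun n => (hRm n).aestronglyMeasurable) ?_
    filter_upwards [hae] with ω ⟨l, hl, hx⟩
    exact ew_path_R hc hl hx
  have hrt : TendstoInMeasure (μ[|A]) (fun n ω => H n ω - R n ω * ewN X s a c n ω) atTop
      (fun _ => 0) := by
    refine tendstoInMeasure_of_tendsto_ae
      (fun n => ((hHm n).sub ((hRm n).mul (hNm n))).aestronglyMeasurable) ?_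
    filter_upwards [hae] with ω ⟨l, hl, hx⟩
    refine ew_path_res hc (y := fun k => X (k + 1) ω - a * s k ω) hl (fun k => h.hs1 k ω) ?_
      (h.hs0 ω) hx
    intro k hk
    have h1 : |X (k + 1) ω| ≤ 1 := by
      rcases h.hX (k + 1) (by omega) ω with h | h <;> simp [h]
    have h2 : |a * s k ω| ≤ 1 := by
      rw [abs_mul]; exact mul_le_one₀ h.ha (abs_nonneg _) (h.hs1 k ω)
    exact (abs_sub _ _).trans (by linarith)
  have c1 := hN.continuous_comp_prodMk_of_tendstoInMeasure_const
    (g := fun x : ℝ × ℝ => x.2 * x.1) (by fun_prop) hRt (fun n => (hRm n).aemeasurable)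
  have c2 := c1.add_of_tendstoInMeasure_const hrt
    (fun n => ((hHm n).sub ((hRm n).mul (hNm n))).aemeasurable)
  have c3 := (ProbabilityMeasure.tendsto_iff_forall_integral_tendsto.mp c2.tendsto) f
  simp only [ProbabilityMeasure.coe_mk] at c3
  have e1 : (fun ω : ℝ => 1 * id ω + 0) = id := by funext ω; simp
  rw [e1, Measure.map_id] at c3
  refine c3.congr fun n => ?_
  have e2 : ((fun ω => R n ω * ewN X s a c n ω) + fun ω => H n ω - R n ω * ewN X s a c n ω) = H n := by
    funext ω; simp
  rw [e2, integral_map (hHm n).aemeasurable f.continuous.measurable.aestronglyMeasurable]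

lemma ew_range_sum (f : ℕ → ℝ) (h0 : f 0 = 0) (n : ℕ) (hn : 1 ≤ n) :
    ∑ k ∈ Finset.range n, f k = ∑ k ∈ Finset.Icc 1 (n - 1), f k := by
  symm
  refine Finset.sum_subset ?_ ?_
  · intro k hk; simp only [Finset.mem_Icc, Finset.mem_range] at *; omega
  · intro k hk hk'
    simp only [Finset.mem_Icc, Finset.mem_range] at *
    have : k = 0 := by omega
    rw [this, h0]

lemma ew_coef (a : ℝ) (ha : 1 / 2 < a) (ha1 : a < 1) : ERWCoef (fun k : ℕ => (k : ℝ) ^ (a - 1)) where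
  nonneg k := by positivity
  le_one k := by
    rcases Nat.eq_zero_or_pos k with rfl | hk
    · simp [Real.zero_rpow (by linarith : a - 1 ≠ 0)]
    · exact Real.rpow_le_one_of_one_le_of_nonpos (by exact_mod_cast hk) (by linarith)
  pos k hk := Real.rpow_pos_of_pos (by exact_mod_cast hk) _
  sum := by
    rw [← not_summable_iff_tendsto_nat_atTop_of_nonneg (fun k => sq_nonneg _)]
    have : (fun k : ℕ => ((k : ℝ) ^ (a - 1)) ^ 2) = fun k : ℕ => (k : ℝ) ^ ((a - 1) * 2) := by
      funext k
      rw [Real.rpow_mul (by positivity)]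
      norm_cast
    rw [this, Real.summable_nat_rpow]
    linarith
  zero := by
    have := (tendsto_rpow_neg_atTop (by linarith : 0 < 1 - a)).comp tendsto_natCast_atTop_atTop (α := ℕ)
    refine this.congr fun k => ?_
    simp

/-- In the superdiffusive regime `3/4 < p < 1`, conditionally on `{L² > 0}`,
`√(V_n) (p̂_n - p)` converges in distribution to the standard Gaussian law. -/
theorem erw_clt_superdiffusive
    {m0 : MeasurableSpace Ω} (μ : Measure Ω) [IsProbabilityMeasure μ]
    (ℱ : Filtration ℕ m0) (X : ℕ → Ω → ℝ) (p : ℝ)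
    (hERW : IsERW μ ℱ X p) (hp : 3 / 4 < p) (hp' : p < 1) (L : Ω → ℝ)
    (hL : ∀ᵐ ω ∂μ, Tendsto (fun n => erwS X n ω / (n : ℝ) ^ (2 * p - 1)) atTop (𝓝 (L ω)))
    (hLpos : 0 < μ {ω | 0 < L ω ^ 2}) :
    ∀ f : ℝ →ᵇ ℝ,
      Tendsto (fun n => ∫ ω, f (Real.sqrt (erwV X n ω) * (erwPhat X n ω - p))
          ∂(μ[|{ω | 0 < L ω ^ 2}]))
        atTop (𝓝 (∫ x, f x ∂(gaussianReal 0 1))) := by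

  intro f
  obtain ⟨hp0, hp1, hX, hXm, hcond⟩ := hERW
  set a : ℝ := 2 * p - 1 with ha
  have ha2 : 1 / 2 < a := by rw [ha]; linarith
  have ha1 : a < 1 := by rw [ha]; linarith
  set c : ℕ → ℝ := fun k => (k : ℝ) ^ (a - 1) with hcdef
  have hc : ERWCoef c := ew_coef a ha2 ha1
  set s : ℕ → Ω → ℝ := fun k ω => erwS X k ω / k with hs
  have hSm : ∀ n, Measurable[ℱ n] (erwS X n) := fun n =>
    Finset.measurable_fun_sum _ fun k hk =>
      (hXm k (Finset.mem_Icc.mp hk).1).mono (ℱ.mono (Finset.mem_Icc.mp hk).2) le_rfl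
  have hs0 : ∀ ω, s 0 ω = 0 := fun ω => by simp [hs]
  have hset : ERWSetup μ ℱ X s a := by
    refine ⟨hX, hXm, hcond, fun n => (hSm n).div_const _, fun n ω => ?_, ?_, hs0⟩
    · simp only [hs]
      rw [abs_div, Nat.abs_cast]
      refine div_le_one_of_le₀ ?_ (by positivity)
      refine (Finset.abs_sum_le_sum_abs _ _).trans ?_
      refine (Finset.sum_le_card_nsmul _ _ 1 fun k hk => ?_).trans (by simp)
      rcases hX k (Finset.mem_Icc.mp hk).1 ω with h | h <;> simp [h]
    · rw [abs_le]; constructor <;> linarith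
  have hsc : ∀ k ω, s k ω / c k = erwS X k ω / (k : ℝ) ^ a := by
    intro k ω
    rcases Nat.eq_zero_or_pos k with rfl | hk
    · simp [hs, erwS]
    · have hk' : (0 : ℝ) < k := by exact_mod_cast hk
      simp only [hs, hcdef]
      rw [div_div, Real.rpow_sub_one hk'.ne', mul_div_cancel₀ _ hk'.ne']
  have hL' : ∀ᵐ ω ∂μ, Tendsto (fun k => s k ω / c k) atTop (𝓝 (L ω)) := by
    filter_upwards [hL] with ω hω
    exact hω.congr fun k => (hsc k ω).symm
  have hsz : ∀ᵐ ω ∂μ, Tendsto (fun k => s k ω) atTop (𝓝 0) := by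
    filter_upwards [hL'] with ω hω
    have := hω.mul hc.zero
    rw [mul_zero] at this
    refine this.congr' ?_
    filter_upwards [eventually_ge_atTop 1] with k hk
    exact div_mul_cancel₀ _ (hc.pos k hk).ne'
  set L' : Ω → ℝ := fun ω => limsup (fun k => s k ω / c k) atTop with hL'def
  have hL'm : Measurable[⨆ n, ℱ n] L' := by
    refine Measurable.limsup fun k => ?_
    exact ((hset.hsm k).mono (le_iSup (fun n => (ℱ n : MeasurableSpace Ω)) k) le_rfl).div_const _
  have hLL : ∀ᵐ ω ∂μ, L' ω = L ω := by
    filter_upwards [hL'] with ω hω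
    exact hω.limsup_eq
  set A : Set Ω := {ω | L' ω ≠ 0} with hA
  have hAm : MeasurableSet[⨆ n, ℱ n] A :=
    hL'm (measurableSet_singleton (0 : ℝ)).compl
  have hAA : ({ω | 0 < L ω ^ 2} : Set Ω) =ᵐ[μ] A := by
    filter_upwards [hLL] with ω hω
    apply propext
    change 0 < L ω ^ 2 ↔ L' ω ≠ 0
    rw [hω, sq_pos_iff]
  have hcondeq : μ[|{ω | 0 < L ω ^ 2}] = μ[|A] := by
    unfold ProbabilityTheory.cond
    rw [Measure.restrict_congr_set hAA, measure_congr hAA]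
  have hApos : μ A ≠ 0 := by
    rw [← measure_congr hAA]; exact hLpos.ne'
  rw [hcondeq]
  have hmain := ew_clt hset hc hsz A hAm (by
    filter_upwards [hL', hLL] with ω h1 h2 h3
    exact ⟨L ω, by rw [← h2]; exact h3, h1⟩) hApos f
  refine hmain.congr' ?_
  filter_upwards [eventually_ge_atTop 2] with n hn
  refine integral_congr_ae (ae_of_all _ fun ω => ?_)
  simp only
  congr 1
  have r1 := ew_range_sum (fun k => s k ω ^ 2) (by simp [hs0]) n (by omega)
  have r2 := ew_range_sum (fun k => s k ω * (X (k + 1) ω - a * s k ω)) (by simp [hs0]) n (by omega)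
  rw [r1, r2]
  unfold erwV erwPhat
  change _ = √(4 * ∑ k ∈ Finset.Icc 1 (n - 1), s k ω ^ 2) *
    ((∑ k ∈ Finset.Icc 1 (n - 1), s k ω * (X (k + 1) ω + s k ω)) /
      (2 * ∑ k ∈ Finset.Icc 1 (n - 1), s k ω ^ 2) - p)
  have e1 : ∑ k ∈ Finset.Icc 1 (n - 1), s k ω * (X (k + 1) ω - a * s k ω) =
      ∑ k ∈ Finset.Icc 1 (n - 1), s k ω * (X (k + 1) ω + s k ω) -
        2 * p * ∑ k ∈ Finset.Icc 1 (n - 1), s k ω ^ 2 := by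
    rw [Finset.mul_sum, ← Finset.sum_sub_distrib]
    refine Finset.sum_congr rfl fun k _ => ?_
    rw [ha]; ring
  rw [e1]
  have hD : 0 < ∑ k ∈ Finset.Icc 1 (n - 1), s k ω ^ 2 := by
    refine Finset.sum_pos' (fun _ _ => sq_nonneg _) ⟨1, Finset.mem_Icc.mpr ⟨le_rfl, by omega⟩, ?_⟩
    have : s 1 ω = X 1 ω := by simp [hs, erwS]
    rw [this]
    rcases hX 1 le_rfl ω with h | h <;> simp [h]
  generalize ∑ k ∈ Finset.Icc 1 (n - 1), s k ω ^ 2 = D at *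
  generalize ∑ k ∈ Finset.Icc 1 (n - 1), s k ω * (X (k + 1) ω + s k ω) = M at *
  have hsD : 0 < √D := Real.sqrt_pos.mpr hD
  have h4 : √(4 * D) = 2 * √D := by
    rw [Real.sqrt_mul (by norm_num), show (4 : ℝ) = 2 ^ 2 by norm_num, Real.sqrt_sq (by norm_num)]
  rw [h4]
  have hDD : D = √D * √D := (Real.mul_self_sqrt hD.le).symm
  rw [div_eq_iff hsD.ne']
  have : 2 * √D * (M / (2 * D) - p) * √D = 2 * (√D * √D) * (M / (2 * D) - p) := by ring
  rw [this, ← hDD]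
  field_simp
end
end

section
/- Local asymptotic mixed normality expansion in the superdiffusive regime: let 3/4 < p < 1 and let (h_n) be a sequence of real numbers converging to a real number h. Then, almost surely, the log-likelihood ratio satisfies Λ_n(p + h_n·n^{−(4p−3)/2}) − Λ_n(p) = h_n·Δ_n(p) − (h_n²/2)·J_n(p) + o(1) as n → ∞, where Δ_n(p) = 2 P_n/n^{(4p−3)/2} and J_n(p) = V_n/n^{4p−3}. -/
open MeasureTheory ProbabilityTheory Filter Finset
open scoped BoundedContinuousFunction ENNReal NNReal Topology

noncomputable section

variable {Ω : Type*}

/-- The score-type martingale `P n = ∑_{k=1}^{n-1} (S k / k) ε_{k+1} / (1 - a² (S k / k)²)`. -/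
def erwP (X : ℕ → Ω → ℝ) (a : ℝ) (n : ℕ) (ω : Ω) : ℝ :=
  ∑ k ∈ Finset.Icc 1 (n - 1),
    (erwS X k ω / k) * (X (k + 1) ω - a * (erwS X k ω / k)) /
      (1 - a ^ 2 * (erwS X k ω / k) ^ 2)

/-- The log-likelihood function (up to an additive term independent of `u`). -/
def erwLogLik (X : ℕ → Ω → ℝ) (u : ℝ) (n : ℕ) (ω : Ω) : ℝ :=
  ∑ k ∈ Finset.Icc 1 (n - 1),
    ((1 + X (k + 1) ω) / 2 * Real.log ((1 + (2 * u - 1) * (erwS X k ω / k)) / 2) +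
      (1 - X (k + 1) ω) / 2 * Real.log ((1 - (2 * u - 1) * (erwS X k ω / k)) / 2))

/-- Pointwise expansion of one log-likelihood increment, in terms of `w = x * ε`. -/
lemma erw_term_aux (a w d : ℝ) (ha0 : 0 < a) (ha1 : a < 1) (hw : |w| ≤ 1)
    (hd : |d| ≤ (1 - a) / 4) :
    |Real.log ((1 + (a + 2 * d) * w) / 2) - Real.log ((1 + a * w) / 2)
      - (2 * d * (w / (1 + a * w)) - 2 * d ^ 2 * w ^ 2)|
      ≤ (10 / (1 - a) ^ 2) * (d ^ 2 * |w| ^ 3) := by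
  have hb : 0 < 1 - a := by linarith
  have haw : |a * w| ≤ a := by
    rw [abs_mul, abs_of_pos ha0]; nlinarith
  have hz := abs_le.1 haw
  have hz1 : 1 - a ≤ 1 + a * w := by linarith
  have hz0 : 0 < 1 + a * w := by linarith
  set z := a * w with hzdef
  set y := 2 * d * w / (1 + z) with hy
  have hyabs : |y| ≤ 2 * |d| * |w| / (1 - a) := by
    rw [hy, abs_div, abs_mul, abs_mul, abs_of_pos hz0, abs_two]
    gcongr
  have hyd : |y| ≤ |w| / 2 := by
    refine hyabs.trans ?_
    rw [div_le_iff₀ hb]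
    nlinarith [abs_nonneg w]
  have hyh : |y| ≤ 1 / 2 := by linarith
  have hy1 := abs_le.1 hyh
  have hlog : Real.log ((1 + (a + 2 * d) * w) / 2) - Real.log ((1 + z) / 2) = Real.log (1 + y) := by
    have : (1 + (a + 2 * d) * w) / 2 = (1 + z) / 2 * (1 + y) := by
      rw [hy]; field_simp; rw [hzdef]; ring
    rw [this, Real.log_mul (by positivity) (by linarith)]; ring
  have hL := Real.abs_log_sub_add_sum_range_le (x := -y) (by rw [abs_neg]; linarith) 2
  rw [abs_neg] at hL
  simp only [Finset.sum_range_succ, Finset.sum_range_zero, sub_neg_eq_add] at hL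
  have hL2 : |Real.log (1 + y) - y + y ^ 2 / 2| ≤ 2 * |y| ^ 3 := by
    have e : Real.log (1 + y) - y + y ^ 2 / 2 = 0 + (-y) ^ (0 + 1) / ((0 : ℕ) + 1) + (-y) ^ (1 + 1) / ((1 : ℕ) + 1)
      + Real.log (1 + y) := by push_cast; ring
    rw [e]
    refine hL.trans ?_
    rw [div_le_iff₀ (by linarith)]
    have h3 : 0 ≤ |y| ^ 3 := by positivity
    have h4 := mul_le_mul_of_nonneg_left hyh h3
    show |y| ^ 3 ≤ _
    linarith
  have hy3 : |y| ^ 3 ≤ 2 / (1 - a) ^ 2 * (d ^ 2 * |w| ^ 3) := by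
    have h2 : |y| ^ 2 ≤ (2 * |d| * |w| / (1 - a)) ^ 2 := by gcongr
    calc |y| ^ 3 = |y| ^ 2 * |y| := by ring
      _ ≤ (2 * |d| * |w| / (1 - a)) ^ 2 * (|w| / 2) := by gcongr
      _ = 2 / (1 - a) ^ 2 * (|d| ^ 2 * |w| ^ 3) := by field_simp
      _ = _ := by rw [sq_abs]
  have hq : |2 * d ^ 2 * w ^ 2 - y ^ 2 / 2| ≤ 6 / (1 - a) ^ 2 * (d ^ 2 * |w| ^ 3) := by
    have e : 2 * d ^ 2 * w ^ 2 - y ^ 2 / 2 = 2 * d ^ 2 * w ^ 2 * (z * (2 + z)) / (1 + z) ^ 2 := by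
      rw [hy]; field_simp; ring
    have hz3 : |2 + z| ≤ 3 := by rw [abs_le]; constructor <;> linarith
    have hzw : |z| ≤ |w| := by
      rw [hzdef, abs_mul, abs_of_pos ha0]; nlinarith [abs_nonneg w]
    rw [e, abs_div, abs_mul, abs_mul, abs_mul z, abs_of_pos (by positivity : 0 < (1 + z) ^ 2),
      abs_of_nonneg (by positivity : 0 ≤ 2 * d ^ 2), abs_of_nonneg (by positivity : 0 ≤ w ^ 2)]
    calc 2 * d ^ 2 * w ^ 2 * (|z| * |2 + z|) / (1 + z) ^ 2
        ≤ 2 * d ^ 2 * w ^ 2 * (|w| * 3) / (1 - a) ^ 2 := by gcongr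
      _ = 6 / (1 - a) ^ 2 * (d ^ 2 * (w ^ 2 * |w|)) := by ring
      _ = 6 / (1 - a) ^ 2 * (d ^ 2 * |w| ^ 3) := by rw [← sq_abs w]; ring
  have e : Real.log ((1 + (a + 2 * d) * w) / 2) - Real.log ((1 + z) / 2)
      - (2 * d * (w / (1 + z)) - 2 * d ^ 2 * w ^ 2)
      = (Real.log (1 + y) - y + y ^ 2 / 2) + (2 * d ^ 2 * w ^ 2 - y ^ 2 / 2) := by
    rw [hlog, hy]; ring
  rw [e]
  refine (abs_add_le _ _).trans ?_
  have : (10 / (1 - a) ^ 2) * (d ^ 2 * |w| ^ 3)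
    = 2 * (2 / (1 - a) ^ 2 * (d ^ 2 * |w| ^ 3)) + 6 / (1 - a) ^ 2 * (d ^ 2 * |w| ^ 3) := by ring
  linarith

/-- Expansion of one log-likelihood increment. -/
lemma erw_term (a x e d : ℝ) (ha0 : 0 < a) (ha1 : a < 1) (hx : |x| ≤ 1) (he : e = 1 ∨ e = -1)
    (hd : |d| ≤ (1 - a) / 4) :
    |((1 + e) / 2 * Real.log ((1 + (a + 2 * d) * x) / 2) +
      (1 - e) / 2 * Real.log ((1 - (a + 2 * d) * x) / 2)) -
      ((1 + e) / 2 * Real.log ((1 + a * x) / 2) +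
      (1 - e) / 2 * Real.log ((1 - a * x) / 2)) -
      (2 * d * (x * (e - a * x) / (1 - a ^ 2 * x ^ 2)) - 2 * d ^ 2 * x ^ 2)|
      ≤ (10 / (1 - a) ^ 2) * (d ^ 2 * |x| ^ 3) := by
  have haw : |a * x| ≤ a := by
    rw [abs_mul, abs_of_pos ha0]; nlinarith
  have hz := abs_le.1 haw
  have h1 : 1 + a * x ≠ 0 := by linarith
  have h2 : 1 - a * x ≠ 0 := by linarith
  have h3 : 1 - a ^ 2 * x ^ 2 ≠ 0 := by
    have : 1 - a ^ 2 * x ^ 2 = (1 + a * x) * (1 - a * x) := by ring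
    rw [this]; exact mul_ne_zero h1 h2
  rcases he with rfl | rfl
  · have := erw_term_aux a x d ha0 ha1 hx hd
    have e : x * (1 - a * x) / (1 - a ^ 2 * x ^ 2) = x / (1 + a * x) := by
      rw [div_eq_div_iff h3 h1]; ring
    rw [e]
    convert this using 2
    ring
  · have := erw_term_aux a (-x) d ha0 ha1 (by rwa [abs_neg]) hd
    rw [abs_neg] at this
    have e : x * (-1 - a * x) / (1 - a ^ 2 * x ^ 2) = -x / (1 + a * -x) := by
      rw [div_eq_div_iff h3 (by rw [mul_neg, ← sub_eq_add_neg]; exact h2)]; ring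
    rw [e]
    convert this using 2
    rw [show 1 - (a + 2 * d) * x = 1 + (a + 2 * d) * -x by ring,
      show 1 - a * x = 1 + a * -x by ring]
    ring

/-- Kronecker-type lemma. -/
lemma erw_kronecker (b : ℕ → ℝ) (s : ℝ) (hs : 0 < s) (hb : ∀ k, 0 ≤ b k)
    (hsum : Summable fun k : ℕ => (k : ℝ) ^ (-s) * b k) :
    Tendsto (fun n : ℕ => (n : ℝ) ^ (-s) * ∑ k ∈ Finset.Icc 1 (n - 1), b k) atTop (𝓝 0) := by
  have key := tendsto_tsum_of_dominated_convergence (𝓕 := atTop)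
    (f := fun (n k : ℕ) => if k ∈ Finset.Icc 1 (n - 1) then (n : ℝ) ^ (-s) * b k else 0)
    (g := fun _ => 0) hsum ?_ ?_
  · rw [tsum_zero] at key
    refine key.congr fun n => ?_
    rw [tsum_eq_sum (s := Finset.Icc 1 (n - 1)) (fun k hk => by rw [if_neg hk]), Finset.mul_sum]
    exact Finset.sum_congr rfl fun k hk => by rw [if_pos hk]
  · intro k
    have h0 : Tendsto (fun n : ℕ => (n : ℝ) ^ (-s) * b k) atTop (𝓝 0) := by
      have := ((tendsto_rpow_neg_atTop hs).comp tendsto_natCast_atTop_atTop).mul_const (b k)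
      simpa using this
    refine squeeze_zero (fun n => ?_) (fun n => ?_) h0
    · have := hb k
      split_ifs <;> positivity
    · have := hb k
      split_ifs
      · exact le_rfl
      · positivity
  · refine Eventually.of_forall fun n k => ?_
    have := hb k
    split_ifs with h
    · rw [Finset.mem_Icc] at h
      rw [Real.norm_of_nonneg (by positivity)]
      have hk : (0 : ℝ) < k := by exact_mod_cast h.1
      have hkn : (k : ℝ) ≤ n := by exact_mod_cast (by omega : k ≤ n)
      have := Real.rpow_le_rpow_of_nonpos hk hkn (by linarith : -s ≤ 0)
      gcongr
    · rw [norm_zero]; positivity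

/-- Deterministic part: the expansion on a path. -/
lemma erw_path (X : ℕ → Ω → ℝ) (ω : Ω) (p : ℝ) (hp : 3 / 4 < p) (hp' : p < 1)
    (hX : ∀ n, 1 ≤ n → X n ω = 1 ∨ X n ω = -1) (hS : ∀ n, |erwS X n ω / n| ≤ 1)
    (hT : Tendsto (fun n : ℕ => (n : ℝ) ^ (-(4 * p - 3)) *
      ∑ k ∈ Finset.Icc 1 (n - 1), |erwS X k ω / k| ^ 3) atTop (𝓝 0))
    (hn : ℕ → ℝ) (h : ℝ) (hconv : Tendsto hn atTop (𝓝 h)) :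
    Tendsto (fun n =>
        (erwLogLik X (p + hn n * (n : ℝ) ^ (-(4 * p - 3) / 2)) n ω - erwLogLik X p n ω) -
          (hn n * (2 * erwP X (2 * p - 1) n ω / (n : ℝ) ^ ((4 * p - 3) / 2)) -
            hn n ^ 2 / 2 * (erwV X n ω / (n : ℝ) ^ (4 * p - 3))))
      atTop (𝓝 0) := by
  set a := 2 * p - 1 with ha
  have hd0 : Tendsto (fun n : ℕ => hn n * (n : ℝ) ^ (-(4 * p - 3) / 2)) atTop (𝓝 0) := by
    have := hconv.mul ((tendsto_rpow_neg_atTop (by linarith : 0 < (4 * p - 3) / 2)).comp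
      tendsto_natCast_atTop_atTop)
    rw [mul_zero] at this
    refine this.congr fun n => ?_
    rw [neg_div]; rfl
  have hsmall : ∀ᶠ n : ℕ in atTop, |hn n * (n : ℝ) ^ (-(4 * p - 3) / 2)| ≤ (1 - a) / 4 := by
    have := hd0.abs
    rw [abs_zero] at this
    exact this.eventually_le_const (by linarith)
  have hbd : Tendsto (fun n : ℕ => (10 / (1 - a) ^ 2) * (hn n ^ 2 * ((n : ℝ) ^ (-(4 * p - 3)) *
      ∑ k ∈ Finset.Icc 1 (n - 1), |erwS X k ω / k| ^ 3))) atTop (𝓝 0) := by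
    have := ((hconv.pow 2).mul hT).const_mul (10 / (1 - a) ^ 2)
    simpa using this
  refine squeeze_zero_norm' ?_ hbd
  filter_upwards [hsmall, eventually_ge_atTop 1] with n hd hn1
  have hnpos : (0 : ℝ) < n := by exact_mod_cast hn1
  set r := (n : ℝ) ^ (-(4 * p - 3) / 2) with hr
  have hr1 : (n : ℝ) ^ ((4 * p - 3) / 2) = r⁻¹ := by
    rw [hr, neg_div, Real.rpow_neg hnpos.le, inv_inv]
  have hr2 : (n : ℝ) ^ (-(4 * p - 3)) = r ^ 2 := by
    rw [hr, ← Real.rpow_natCast, ← Real.rpow_mul hnpos.le]; congr 1; push_cast; ring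
  have hr3 : (n : ℝ) ^ (4 * p - 3) = (r ^ 2)⁻¹ := by
    rw [← hr2, Real.rpow_neg hnpos.le, inv_inv]
  set d := hn n * r with hdd
  have e : (erwLogLik X (p + d) n ω - erwLogLik X p n ω) -
          (hn n * (2 * erwP X a n ω / (n : ℝ) ^ ((4 * p - 3) / 2)) -
            hn n ^ 2 / 2 * (erwV X n ω / (n : ℝ) ^ (4 * p - 3)))
      = ∑ k ∈ Finset.Icc 1 (n - 1),
       (((1 + X (k + 1) ω) / 2 * Real.log ((1 + (a + 2 * d) * (erwS X k ω / k)) / 2) +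
      (1 - X (k + 1) ω) / 2 * Real.log ((1 - (a + 2 * d) * (erwS X k ω / k)) / 2)) -
      ((1 + X (k + 1) ω) / 2 * Real.log ((1 + a * (erwS X k ω / k)) / 2) +
      (1 - X (k + 1) ω) / 2 * Real.log ((1 - a * (erwS X k ω / k)) / 2)) -
      (2 * d * ((erwS X k ω / k) * (X (k + 1) ω - a * (erwS X k ω / k)) /
        (1 - a ^ 2 * (erwS X k ω / k) ^ 2)) - 2 * d ^ 2 * (erwS X k ω / k) ^ 2)) := by
    rw [Finset.sum_sub_distrib, Finset.sum_sub_distrib, Finset.sum_sub_distrib, ← Finset.mul_sum,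
      ← Finset.mul_sum, hr1, hr3, div_inv_eq_mul, div_inv_eq_mul]
    have h1 : 2 * (p + d) - 1 = a + 2 * d := by rw [ha]; ring
    simp only [erwLogLik, erwP, erwV, h1, ← ha]
    rw [hdd]; ring
  rw [e, hr2]
  refine (norm_sum_le _ _).trans ?_
  have e2 : (10 / (1 - a) ^ 2) * (hn n ^ 2 * (r ^ 2 *
      ∑ k ∈ Finset.Icc 1 (n - 1), |erwS X k ω / k| ^ 3))
      = ∑ k ∈ Finset.Icc 1 (n - 1), (10 / (1 - a) ^ 2) * (d ^ 2 * |erwS X k ω / k| ^ 3) := by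
    rw [← Finset.mul_sum, ← Finset.mul_sum, hdd]; ring
  rw [e2]
  refine Finset.sum_le_sum fun k hk => ?_
  exact erw_term a _ _ d (by linarith) (by linarith) (hS k) (hX _ (by omega)) hd

lemma erwS_succ (X : ℕ → Ω → ℝ) (n : ℕ) (ω : Ω) :
    erwS X (n + 1) ω = erwS X n ω + X (n + 1) ω := by
  unfold erwS
  rw [Finset.sum_Icc_succ_top (by omega)]

lemma erwS_abs_le (X : ℕ → Ω → ℝ) (ω : Ω) (hX : ∀ n, 1 ≤ n → X n ω = 1 ∨ X n ω = -1) (n : ℕ) :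
    |erwS X n ω| ≤ n := by
  induction n with
  | zero => simp [erwS]
  | succ n ih =>
    rw [erwS_succ]
    refine (abs_add_le _ _).trans ?_
    have : |X (n + 1) ω| = 1 := by
      rcases hX (n + 1) (by omega) with h | h <;> simp [h]
    push_cast; linarith

lemma erw_bern (n : ℕ) (hn : 1 ≤ n) (q : ℝ) (hq : 1 ≤ q) :
    (n : ℝ) ^ q * (1 + q / n) ≤ ((n + 1 : ℕ) : ℝ) ^ q := by
  have hn0 : (0 : ℝ) < n := by exact_mod_cast hn
  have h0 : (0 : ℝ) ≤ 1 / n := by positivity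
  have h := one_add_mul_self_le_rpow_one_add (s := 1 / (n : ℝ)) (by linarith) hq
  have e : ((n + 1 : ℕ) : ℝ) = n * (1 + 1 / n) := by push_cast; field_simp
  rw [e, Real.mul_rpow hn0.le (by positivity)]
  have : q / (n : ℝ) = q * (1 / n) := by ring
  rw [this]
  gcongr

lemma erwS_meas {m0 : MeasurableSpace Ω} (ℱ : Filtration ℕ m0) (X : ℕ → Ω → ℝ)
    (hXm : ∀ n, 1 ≤ n → Measurable[ℱ n] (X n)) (n : ℕ) : Measurable[ℱ n] (erwS X n) := by
  unfold erwS
  refine Finset.measurable_fun_sum _ fun k hk => ?_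
  rw [Finset.mem_Icc] at hk
  exact (hXm k hk.1).mono (ℱ.mono hk.2) le_rfl

lemma erw_int {m0 : MeasurableSpace Ω} (μ : Measure Ω) [IsProbabilityMeasure μ]
    (f : Ω → ℝ) (hf : Measurable f) (C : ℝ) (hC : ∀ ω, |f ω| ≤ C) : Integrable f μ :=
  Integrable.of_bound hf.aestronglyMeasurable C (ae_of_all _ hC)

section
variable {m0 : MeasurableSpace Ω} (μ : Measure Ω) [IsProbabilityMeasure μ]
    (ℱ : Filtration ℕ m0) (X : ℕ → Ω → ℝ) (p : ℝ)

lemma erw_pull (hERW : IsERW μ ℱ X p) (n : ℕ) (hn : 1 ≤ n) (j : ℕ) :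
    ∫ ω, erwS X n ω ^ j * X (n + 1) ω ∂μ =
      (2 * p - 1) / n * ∫ ω, erwS X n ω ^ (j + 1) ∂μ := by
  obtain ⟨-, -, hX, hXm, hc⟩ := hERW
  have hSm := erwS_meas ℱ X hXm n
  have hX1 : Measurable (X (n + 1)) := (hXm (n + 1) (by omega)).mono (ℱ.le _) le_rfl
  have hXb : ∀ ω, |X (n + 1) ω| ≤ 1 := fun ω => by
    rcases hX (n + 1) (by omega) ω with h | h <;> simp [h]
  have hSb : ∀ ω, |erwS X n ω| ≤ n := fun ω => erwS_abs_le X ω (fun k hk => hX k hk ω) n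
  have hXi : Integrable (X (n + 1)) μ := erw_int μ _ hX1 1 hXb
  have hfm : StronglyMeasurable[ℱ n] (fun ω => erwS X n ω ^ j) :=
    (hSm.pow_const j).stronglyMeasurable
  have hfi : Integrable ((fun ω => erwS X n ω ^ j) * X (n + 1)) μ := by
    refine erw_int μ _ (((hSm.mono (ℱ.le n) le_rfl).pow_const j).mul hX1) ((n : ℝ) ^ j * 1) ?_
    intro ω
    rw [Pi.mul_apply, abs_mul, abs_pow]
    have := hSb ω
    have := hXb ω
    gcongr
  have h1 := condExp_mul_of_stronglyMeasurable_left hfm hfi hXi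
  have h2 := integral_condExp (μ := μ) (ℱ.le n) (f := (fun ω => erwS X n ω ^ j) * X (n + 1))
  calc ∫ ω, erwS X n ω ^ j * X (n + 1) ω ∂μ
      = ∫ ω, (μ[(fun ω => erwS X n ω ^ j) * X (n + 1) | ℱ n]) ω ∂μ := h2.symm
    _ = ∫ ω, (2 * p - 1) / n * erwS X n ω ^ (j + 1) ∂μ := by
        refine integral_congr_ae ?_
        filter_upwards [h1, hc n hn] with ω e1 e2
        rw [e1, Pi.mul_apply, e2]; ring
    _ = _ := integral_const_mul _ _

lemma erw_pow_int (hERW : IsERW μ ℱ X p) (n j : ℕ) :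
    Integrable (fun ω => erwS X n ω ^ j) μ := by
  obtain ⟨-, -, hX, hXm, hc⟩ := hERW
  have hSm := (erwS_meas ℱ X hXm n).mono (ℱ.le n) le_rfl
  refine erw_int μ _ (hSm.pow_const j) ((n : ℝ) ^ j) fun ω => ?_
  rw [abs_pow]
  have := erwS_abs_le X ω (fun k hk => hX k hk ω) n
  gcongr

lemma erw_powX_int (hERW : IsERW μ ℱ X p) (n j : ℕ) :
    Integrable (fun ω => erwS X n ω ^ j * X (n + 1) ω) μ := by
  obtain ⟨-, -, hX, hXm, hc⟩ := hERW
  have hSm := (erwS_meas ℱ X hXm n).mono (ℱ.le n) le_rfl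
  have hX1 : Measurable (X (n + 1)) := (hXm (n + 1) (by omega)).mono (ℱ.le _) le_rfl
  refine erw_int μ _ ((hSm.pow_const j).mul hX1) ((n : ℝ) ^ j * 1) fun ω => ?_
  rw [abs_mul, abs_pow]
  have := erwS_abs_le X ω (fun k hk => hX k hk ω) n
  have hXb : |X (n + 1) ω| ≤ 1 := by
    rcases hX (n + 1) (by omega) ω with h | h <;> simp [h]
  gcongr

lemma erw_m2_rec (hERW : IsERW μ ℱ X p) (n : ℕ) (hn : 1 ≤ n) :
    ∫ ω, erwS X (n + 1) ω ^ 2 ∂μ =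
      (1 + 2 * (2 * p - 1) / n) * ∫ ω, erwS X n ω ^ 2 ∂μ + 1 := by
  have hX := hERW.2.2.1
  have e : ∀ ω, erwS X (n + 1) ω ^ 2 =
      erwS X n ω ^ 2 + 2 * (erwS X n ω ^ 1 * X (n + 1) ω) + 1 := by
    intro ω
    rw [erwS_succ]
    rcases hX (n + 1) (by omega) ω with h | h <;> rw [h] <;> ring
  simp_rw [e]
  have i2 := erw_pow_int μ ℱ X p hERW n 2
  have i1 := (erw_powX_int μ ℱ X p hERW n 1).const_mul 2
  have i21 : Integrable (fun ω => erwS X n ω ^ 2 + 2 * (erwS X n ω ^ 1 * X (n + 1) ω)) μ :=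
    i2.add i1
  rw [integral_add i21 (integrable_const _), integral_add i2 i1, integral_const_mul,
    erw_pull μ ℱ X p hERW n hn 1]
  simp
  ring

lemma erw_m4_rec (hERW : IsERW μ ℱ X p) (n : ℕ) (hn : 1 ≤ n) :
    ∫ ω, erwS X (n + 1) ω ^ 4 ∂μ =
      (1 + 4 * (2 * p - 1) / n) * ∫ ω, erwS X n ω ^ 4 ∂μ +
      (6 + 4 * (2 * p - 1) / n) * ∫ ω, erwS X n ω ^ 2 ∂μ + 1 := by
  have hX := hERW.2.2.1
  have e : ∀ ω, erwS X (n + 1) ω ^ 4 =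
      erwS X n ω ^ 4 + 4 * (erwS X n ω ^ 3 * X (n + 1) ω) + 6 * erwS X n ω ^ 2 +
        4 * (erwS X n ω ^ 1 * X (n + 1) ω) + 1 := by
    intro ω
    rw [erwS_succ]
    rcases hX (n + 1) (by omega) ω with h | h <;> rw [h] <;> ring
  simp_rw [e]
  have i4 := erw_pow_int μ ℱ X p hERW n 4
  have i2 := (erw_pow_int μ ℱ X p hERW n 2).const_mul 6
  have i3 := (erw_powX_int μ ℱ X p hERW n 3).const_mul 4
  have i1 := (erw_powX_int μ ℱ X p hERW n 1).const_mul 4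
  have i43 : Integrable (fun ω => erwS X n ω ^ 4 + 4 * (erwS X n ω ^ 3 * X (n + 1) ω)) μ :=
    i4.add i3
  have i432 : Integrable (fun ω => erwS X n ω ^ 4 + 4 * (erwS X n ω ^ 3 * X (n + 1) ω) +
      6 * erwS X n ω ^ 2) μ := i43.add i2
  have i4321 : Integrable (fun ω => erwS X n ω ^ 4 + 4 * (erwS X n ω ^ 3 * X (n + 1) ω) +
      6 * erwS X n ω ^ 2 + 4 * (erwS X n ω ^ 1 * X (n + 1) ω)) μ := i432.add i1
  rw [integral_add i4321 (integrable_const _), integral_add i432 i1, integral_add i43 i2, integral_add i4 i3,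
    integral_const_mul, integral_const_mul, integral_const_mul,
    erw_pull μ ℱ X p hERW n hn 1, erw_pull μ ℱ X p hERW n hn 3]
  simp
  ring

lemma erw_m_one (hERW : IsERW μ ℱ X p) (j : ℕ) (hj : Even j) : ∫ ω, erwS X 1 ω ^ j ∂μ = 1 := by
  have : ∀ ω, erwS X 1 ω ^ j = 1 := fun ω => by
    rcases hERW.2.2.1 1 le_rfl ω with h | h <;> simp [erwS, h, hj.neg_one_pow]
  simp [this]

lemma erw_m2_bound (hERW : IsERW μ ℱ X p) (hp : 3 / 4 < p) : ∃ C : ℝ, 0 < C ∧ ∀ n : ℕ, 1 ≤ n →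
    ∫ ω, erwS X n ω ^ 2 ∂μ ≤ C * (n : ℝ) ^ (2 * (2 * p - 1)) := by
  set a := 2 * p - 1 with ha
  have hD : 0 < 2 * a - 1 := by linarith
  set D := 1 / (2 * a - 1) with hDd
  have hD0 : 0 < D := by positivity
  have hD1 : D * (2 * a - 1) = 1 := by rw [hDd]; field_simp
  have key : ∀ n : ℕ, 1 ≤ n →
      ∫ ω, erwS X n ω ^ 2 ∂μ ≤ (1 + D) * (n : ℝ) ^ (2 * a) - D * n := by
    intro n hn
    induction n, hn using Nat.le_induction with
    | base => rw [erw_m_one μ ℱ X p hERW 2 (by decide)]; simp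
    | succ n hn ih =>
      rw [erw_m2_rec μ ℱ X p hERW n hn, ← ha]
      have hn0 : (0 : ℝ) < n := by exact_mod_cast hn
      have hb := erw_bern n hn (2 * a) (by linarith)
      have ha0 : 0 < a := by linarith
      calc (1 + 2 * a / n) * ∫ ω, erwS X n ω ^ 2 ∂μ + 1
          ≤ (1 + 2 * a / n) * ((1 + D) * (n : ℝ) ^ (2 * a) - D * n) + 1 := by gcongr
        _ = (1 + D) * ((n : ℝ) ^ (2 * a) * (1 + 2 * a / n)) - D * n - D * (2 * a - 1) - D + 1 := by
            field_simp; ring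
        _ = (1 + D) * ((n : ℝ) ^ (2 * a) * (1 + 2 * a / n)) - D * (n + 1 : ℕ) := by
            rw [hD1]; push_cast; ring
        _ ≤ _ := by gcongr
  refine ⟨1 + D, by positivity, fun n hn => (key n hn).trans ?_⟩
  have : 0 ≤ D * n := by positivity
  linarith

lemma erw_m4_bound (hERW : IsERW μ ℱ X p) (hp : 3 / 4 < p) (q : ℝ) (hq : 4 * (2 * p - 1) < q) :
    ∃ C : ℝ, 0 < C ∧ ∀ n : ℕ, 1 ≤ n → ∫ ω, erwS X n ω ^ 4 ∂μ ≤ C * (n : ℝ) ^ q := by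
  obtain ⟨C2, hC2, h2⟩ := erw_m2_bound μ ℱ X p hERW hp
  have hp1 : p ≤ 1 := hERW.2.1
  set a := 2 * p - 1 with ha
  have ha0 : 1 / 2 < a := by linarith
  have hη : 0 < q - 4 * a := by linarith
  set C := 1 + (10 * C2 + 1) / (q - 4 * a) with hC
  have hC0 : 0 < C := by positivity
  have hCη : 10 * C2 + 1 ≤ C * (q - 4 * a) := by
    have : C * (q - 4 * a) = (q - 4 * a) + (10 * C2 + 1) := by rw [hC]; field_simp
    linarith
  refine ⟨C, hC0, ?_⟩
  intro n hn
  induction n, hn using Nat.le_induction with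
  | base =>
    rw [erw_m_one μ ℱ X p hERW 4 (by decide)]
    have : 0 < (10 * C2 + 1) / (q - 4 * a) := by positivity
    simp; linarith
  | succ n hn ih =>
    rw [erw_m4_rec μ ℱ X p hERW n hn, ← ha]
    have hn1 : (1 : ℝ) ≤ n := by exact_mod_cast hn
    have hn0 : (0 : ℝ) < n := by linarith
    have hb := erw_bern n hn q (by linarith)
    have hq1 : (n : ℝ) ^ (q - 1) = (n : ℝ) ^ q / n := by
      rw [Real.rpow_sub hn0, Real.rpow_one]
    have h6 : 6 + 4 * a / n ≤ 10 := by
      have : 4 * a / n ≤ 4 := by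
        rw [div_le_iff₀ hn0]; nlinarith
      linarith
    have hm2 : ∫ ω, erwS X n ω ^ 2 ∂μ ≤ C2 * (n : ℝ) ^ (q - 1) := by
      refine (h2 n hn).trans ?_
      gcongr
      linarith
    have hone : 1 ≤ (n : ℝ) ^ (q - 1) := Real.one_le_rpow hn1 (by linarith)
    have hm0 : 0 ≤ ∫ ω, erwS X n ω ^ 2 ∂μ := integral_nonneg fun ω => by positivity
    calc (1 + 4 * a / n) * ∫ ω, erwS X n ω ^ 4 ∂μ +
          (6 + 4 * a / n) * ∫ ω, erwS X n ω ^ 2 ∂μ + 1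
        ≤ (1 + 4 * a / n) * (C * (n : ℝ) ^ q) + 10 * (C2 * (n : ℝ) ^ (q - 1)) +
          (n : ℝ) ^ (q - 1) := by gcongr
      _ = (1 + 4 * a / n) * (C * (n : ℝ) ^ q) + (10 * C2 + 1) * (n : ℝ) ^ (q - 1) := by ring
      _ ≤ (1 + 4 * a / n) * (C * (n : ℝ) ^ q) + (C * (q - 4 * a)) * (n : ℝ) ^ (q - 1) := by gcongr
      _ = C * ((n : ℝ) ^ q * (1 + q / n)) := by rw [hq1]; field_simp; ring
      _ ≤ _ := by gcongr

lemma erw_summable (hERW : IsERW μ ℱ X p) (hp : 3 / 4 < p) (hp' : p < 1) :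
    ∀ᵐ ω ∂μ, Summable fun k : ℕ => (k : ℝ) ^ (-(4 * p - 3)) * |erwS X k ω / k| ^ 3 := by
  set c := (1 - p) with hc
  obtain ⟨C2, hC2, h2⟩ := erw_m2_bound μ ℱ X p hERW hp
  obtain ⟨C4, hC4, h4⟩ := erw_m4_bound μ ℱ X p hERW hp (4 * (2 * p - 1) + c) (by linarith)
  obtain ⟨-, -, hX, hXm, -⟩ := id hERW
  have hSm : ∀ n, Measurable (erwS X n) := fun n => (erwS_meas ℱ X hXm n).mono (ℱ.le n) le_rfl
  set F : ℕ → Ω → ℝ := fun k ω => (k : ℝ) ^ (-(4 * p - 3)) * |erwS X k ω / k| ^ 3 with hF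
  have hF0 : ∀ k ω, 0 ≤ F k ω := fun k ω => by positivity
  have hFm : ∀ k, Measurable (F k) := fun k =>
    ((((hSm k).div_const _).abs).pow_const 3).const_mul _
  have hSb : ∀ k ω, |erwS X k ω / k| ≤ 1 := fun k ω => by
    rw [abs_div, Nat.abs_cast]
    exact div_le_one_of_le₀ (erwS_abs_le X ω (fun k hk => hX k hk ω) k) (by positivity)
  have hFi : ∀ k, Integrable (F k) μ := fun k => by
    refine erw_int μ _ (hFm k) ((k : ℝ) ^ (-(4 * p - 3)) * 1 ^ 3) fun ω => ?_
    rw [abs_of_nonneg (hF0 k ω)]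
    have := hSb k ω
    simp only [hF]
    gcongr
  have hFb : ∀ k, ∫ ω, F k ω ∂μ ≤ C2 * (k : ℝ) ^ (-1 - c) + C4 * (k : ℝ) ^ (-1 - 2 * c) := by
    intro k
    rcases Nat.eq_zero_or_pos k with rfl | hk
    · have : ∀ ω, F 0 ω = 0 := fun ω => by simp [hF]
      simp only [this, integral_zero]; positivity
    have hk0 : (0 : ℝ) < k := by exact_mod_cast hk
    have i2 := (erw_pow_int μ ℱ X p hERW k 2).const_mul ((k : ℝ) ^ (-(4 * p - 3) - c - 2))
    have i4 := (erw_pow_int μ ℱ X p hERW k 4).const_mul ((k : ℝ) ^ (-(4 * p - 3) + c - 4))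
    calc ∫ ω, F k ω ∂μ ≤ ∫ ω, ((k : ℝ) ^ (-(4 * p - 3) - c - 2) * erwS X k ω ^ 2 +
          (k : ℝ) ^ (-(4 * p - 3) + c - 4) * erwS X k ω ^ 4) ∂μ := by
          refine integral_mono (hFi k) (i2.add i4) fun ω => ?_
          have r2 : (k : ℝ) ^ (-(4 * p - 3) - c - 2)
              = (k : ℝ) ^ (-(4 * p - 3)) * ((k : ℝ) ^ c)⁻¹ / (k : ℝ) ^ 2 := by
            rw [Real.rpow_sub hk0, Real.rpow_sub hk0, Real.rpow_two]; rfl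
          have r4 : (k : ℝ) ^ (-(4 * p - 3) + c - 4)
              = (k : ℝ) ^ (-(4 * p - 3)) * ((k : ℝ) ^ c) / (k : ℝ) ^ 4 := by
            rw [Real.rpow_sub hk0, Real.rpow_add hk0]; norm_cast
          have ht : 0 < (k : ℝ) ^ c := by positivity
          simp only [hF]
          rw [r2, r4]
          set t := (k : ℝ) ^ c
          set x := erwS X k ω / k with hx
          have e : (k : ℝ) ^ (-(4 * p - 3)) * t⁻¹ / (k : ℝ) ^ 2 * erwS X k ω ^ 2 +
            (k : ℝ) ^ (-(4 * p - 3)) * t / (k : ℝ) ^ 4 * erwS X k ω ^ 4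
            = (k : ℝ) ^ (-(4 * p - 3)) * (|x| ^ 2 * (t⁻¹ + t * |x| ^ 2)) := by
            rw [sq_abs, hx]; field_simp
          rw [e, pow_succ |x| 2]
          have : |x| ≤ t⁻¹ + t * |x| ^ 2 := by
            have e3 : t⁻¹ + t * |x| ^ 2 - |x| = t⁻¹ * ((t * |x| - 1 / 2) ^ 2 + 3 / 4) := by
              field_simp; ring
            have : 0 ≤ t⁻¹ * ((t * |x| - 1 / 2) ^ 2 + 3 / 4) := by positivity
            linarith
          gcongr
      _ = (k : ℝ) ^ (-(4 * p - 3) - c - 2) * ∫ ω, erwS X k ω ^ 2 ∂μ +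
          (k : ℝ) ^ (-(4 * p - 3) + c - 4) * ∫ ω, erwS X k ω ^ 4 ∂μ := by
          rw [integral_add i2 i4, integral_const_mul, integral_const_mul]
      _ ≤ (k : ℝ) ^ (-(4 * p - 3) - c - 2) * (C2 * (k : ℝ) ^ (2 * (2 * p - 1))) +
          (k : ℝ) ^ (-(4 * p - 3) + c - 4) * (C4 * (k : ℝ) ^ (4 * (2 * p - 1) + c)) := by
          have := h2 k hk
          have := h4 k hk
          gcongr
      _ = C2 * ((k : ℝ) ^ (-(4 * p - 3) - c - 2) * (k : ℝ) ^ (2 * (2 * p - 1))) +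
          C4 * ((k : ℝ) ^ (-(4 * p - 3) + c - 4) * (k : ℝ) ^ (4 * (2 * p - 1) + c)) := by ring
      _ = _ := by
          rw [← Real.rpow_add hk0, ← Real.rpow_add hk0]
          congr 3
          · ring
          · rw [hc]; ring
  have hFs : Summable fun k => ∫ ω, F k ω ∂μ := by
    refine Summable.of_nonneg_of_le (fun k => integral_nonneg (hF0 k)) hFb ?_
    exact ((Real.summable_nat_rpow.2 (by linarith)).mul_left _).add
      ((Real.summable_nat_rpow.2 (by linarith)).mul_left _)
  have := summable_norm_of_tsum_eLpNorm_ne_top (μ := μ) (p := 1) le_rfl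
    (fun k => (hFm k).aestronglyMeasurable) (f := F) ?_
  · filter_upwards [this] with ω h
    exact h.congr fun k => Real.norm_of_nonneg (hF0 k ω)
  · have e : ∀ k, eLpNorm (F k) 1 μ = ENNReal.ofReal (∫ ω, F k ω ∂μ) := fun k => by
      rw [eLpNorm_one_eq_lintegral_enorm, ofReal_integral_eq_lintegral_ofReal (hFi k)
        (ae_of_all _ (hF0 k))]
      exact lintegral_congr fun ω => Real.enorm_of_nonneg (hF0 k ω)
    simp_rw [e]
    exact hFs.tsum_ofReal_ne_top

end

/-- Local asymptotic mixed normality expansion in the superdiffusive regime `3/4 < p < 1`: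
almost surely, `ℓ_n(p + h_n n^{-(4p-3)/2}) - ℓ_n(p) = h_n Δ_n(p) - (h_n²/2) J_n(p) + o(1)`,
where `Δ_n(p) = 2 P_n / n^{(4p-3)/2}` and `J_n(p) = V_n / n^{4p-3}`. -/
theorem erw_lamn_superdiffusive
    {m0 : MeasurableSpace Ω} (μ : Measure Ω) [IsProbabilityMeasure μ]
    (ℱ : Filtration ℕ m0) (X : ℕ → Ω → ℝ) (p : ℝ)
    (hERW : IsERW μ ℱ X p) (hp : 3 / 4 < p) (hp' : p < 1)
    (hn : ℕ → ℝ) (h : ℝ) (hconv : Tendsto hn atTop (𝓝 h)) :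
    ∀ᵐ ω ∂μ, Tendsto (fun n =>
        (erwLogLik X (p + hn n * (n : ℝ) ^ (-(4 * p - 3) / 2)) n ω - erwLogLik X p n ω) -
          (hn n * (2 * erwP X (2 * p - 1) n ω / (n : ℝ) ^ ((4 * p - 3) / 2)) -
            hn n ^ 2 / 2 * (erwV X n ω / (n : ℝ) ^ (4 * p - 3))))
      atTop (𝓝 0) := by
  have hX := hERW.2.2.1
  filter_upwards [erw_summable μ ℱ X p hERW hp hp'] with ω hs
  refine erw_path X ω p hp hp' (fun n hn => hX n hn ω) (fun k => ?_)
    (erw_kronecker _ _ (by linarith) (fun k => by positivity) hs) hn h hconv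
  rw [abs_div, Nat.abs_cast]
  exact div_le_one_of_le₀ (erwS_abs_le X ω (fun k hk => hX k hk ω) k) (by positivity)
end
end
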